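/- arXiv:1506.03729 — 8 statements merged into one kernel-verified Lean document; each statement's English description precedes it below -/
import Mathlib

section
/- Let k ≥ 1, let c₁, c₂ ∈ ℝ^k have all entries positive with c₁ ≠ c₂, and let p₁, p₂ > 0. Then there exist a constant C > 0 and n₀ ∈ ℕ such that for every integer n ≥ n₀, ∑_{x ∈ ℕ^k} min(p₁ · P_{c₁ ln n}(x), p₂ · P_{c₂ ln n}(x)) ≤ C · n^{−D₊(c₁,c₂)} · (ln n)^{−1/2}. -/
open scoped BigOperators

/-- Multivariate Poisson probability mass function on `ℕ^k` with mean vector `lam`. -/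
noncomputable def poissonPMF {k : ℕ} (lam : Fin k → ℝ) (x : Fin k → ℕ) : ℝ :=
  ∏ i, lam i ^ x i * Real.exp (-lam i) / (Nat.factorial (x i))

/-- The CH-divergence `D₊(μ, ν) = max_{t ∈ [0,1]} ∑ i (t μ i + (1-t) ν i − μ i ^ t ν i ^ (1-t))`. -/
noncomputable def CHdiv {k : ℕ} (μ ν : Fin k → ℝ) : ℝ :=
  sSup ((fun t : ℝ => ∑ i, (t * μ i + (1 - t) * ν i - μ i ^ t * ν i ^ (1 - t))) ''
    Set.Icc (0 : ℝ) 1)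

/-!
For positive reals, `min u v ≤ u ^ t * v ^ (1 - t) * exp (-min t (1 - t) * |log u - log v|)`. The
weighted geometric mean of two Poisson mass functions is `exp (-D_t)` times the Poisson mass
function of the weighted geometric mean of the rates, where `D_t` is the expression maximised in
the CH-divergence; since `D_t` vanishes at `t = 0, 1` and is positive at `t = 1 / 2`, the maximiser
is interior. This gives the factor `n ^ (-D₊)`.

The factor `(log n) ^ (-1 / 2)` comes from anti-concentration. The log-likelihood ratio is affine
in `x`, with nonzero slope along a coordinate `j` where the two rates differ. Along that coordinate
a Poisson mass function of rate `r` is at most `1 / √r`, and what remains to be summed is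
`exp (-|·|)` over an arithmetic progression, which is bounded uniformly in the offset.
-/

open Real
open scoped ENNReal NNReal Nat

lemma tsum_le_of_tsum_ofReal_le {α : Type*} {f : α → ℝ} (hf : ∀ a, 0 ≤ f a) {B : ℝ} (hB : 0 ≤ B)
    (h : ∑' a, ENNReal.ofReal (f a) ≤ ENNReal.ofReal B) : ∑' a, f a ≤ B := by
  have := ENNReal.toReal_mono ENNReal.ofReal_ne_top h
  rw [ENNReal.tsum_toReal_eq fun _ ↦ ENNReal.ofReal_ne_top, ENNReal.toReal_ofReal hB] at this
  simpa only [ENNReal.toReal_ofReal (hf _)] using this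

section ExponentialSums

lemma exp_neg_abs_lt_one {b : ℝ} (hb : b ≠ 0) : exp (-|b|) < 1 :=
  Real.exp_lt_one_iff.2 (neg_lt_zero.2 (abs_pos.2 hb))

lemma tsum_ofReal_exp_neg_nat_mul {a : ℝ} (ha : 0 < a) :
    ∑' n : ℕ, ENNReal.ofReal (exp (-(n * a))) = ENNReal.ofReal (1 - exp (-a))⁻¹ := by
  have hlt : exp (-a) < 1 := Real.exp_lt_one_iff.2 (neg_lt_zero.2 ha)
  have hpow (n : ℕ) : exp (-(n * a)) = exp (-a) ^ n := by rw [← exp_nat_mul, mul_neg]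
  simp_rw [hpow]
  rw [← ENNReal.ofReal_tsum_of_nonneg (fun n ↦ by positivity)
    (summable_geometric_of_lt_one (exp_nonneg _) hlt),
    tsum_geometric_of_lt_one (exp_nonneg _) hlt]

lemma tsum_int_ofReal_exp_neg_abs_le {b : ℝ} (hb : b ≠ 0) (s : ℝ) :
    ∑' z : ℤ, ENNReal.ofReal (exp (-|z * b + s|)) ≤ ENNReal.ofReal (2 / (1 - exp (-|b|))) := by
  -- Recentre at `⌈u⌉`, where `u` is the zero of the exponent: the progression then splits into two
  -- halves whose `n`-th terms are at distance at least `n * |b|` from that zero.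
  set u := -s / b with hu
  have hdist (z : ℤ) : |z * b + s| = |z - u| * |b| := by
    rw [← abs_mul, hu]; congr 1; field_simp; ring
  have habove (n : ℕ) : n * |b| ≤ |((n + ⌈u⌉ : ℤ) : ℝ) * b + s| := by
    rw [hdist]
    gcongr
    push_cast
    exact (by linarith [Int.le_ceil u] : (n : ℝ) ≤ n + ⌈u⌉ - u).trans (le_abs_self _)
  have hbelow (n : ℕ) : n * |b| ≤ |((-(n + 1) + ⌈u⌉ : ℤ) : ℝ) * b + s| := by
    rw [hdist]
    gcongr
    push_cast
    exact (by linarith [Int.ceil_lt_add_one u] : (n : ℝ) ≤ -(-(n + 1) + ⌈u⌉ - u)).trans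
      (neg_le_abs _)
  rw [← (Equiv.addRight ⌈u⌉).tsum_eq, tsum_of_nat_of_neg_add_one ENNReal.summable ENNReal.summable]
  simp only [Equiv.coe_addRight]
  calc
    _ ≤ ∑' n : ℕ, ENNReal.ofReal (exp (-(n * |b|))) +
        ∑' n : ℕ, ENNReal.ofReal (exp (-(n * |b|))) := by
      gcongr with n n
      · exact habove n
      · exact hbelow n
    _ = ENNReal.ofReal (2 / (1 - exp (-|b|))) := by
      have hinv : 0 ≤ (1 - exp (-|b|))⁻¹ := inv_nonneg.2 (sub_pos.2 (exp_neg_abs_lt_one hb)).le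
      rw [tsum_ofReal_exp_neg_nat_mul (abs_pos.2 hb), ← ENNReal.ofReal_add hinv hinv, ← two_mul,
        div_eq_mul_inv]

end ExponentialSums

section PoissonMass

/-- The mass that the Poisson distribution of rate `r` on `ℕ` gives to `m`, so that `poissonPMF` is
the product of the masses of its coordinates. -/
noncomputable def poissonMass (r : ℝ) (m : ℕ) : ℝ :=
  r ^ m * exp (-r) / m !

lemma poissonMass_nonneg {r : ℝ} (hr : 0 ≤ r) (m : ℕ) : 0 ≤ poissonMass r m := by
  unfold poissonMass; positivity

lemma poissonMass_pos {r : ℝ} (hr : 0 < r) (m : ℕ) : 0 < poissonMass r m := by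
  unfold poissonMass; positivity

lemma tsum_ofReal_poissonMass {r : ℝ} (hr : 0 ≤ r) :
    ∑' m, ENNReal.ofReal (poissonMass r m) = 1 := by
  have hsum : HasSum (poissonMass r) 1 := by
    lift r to ℝ≥0 using hr
    convert! ProbabilityTheory.hasSum_one_poissonMeasure r using 2 with m
    rw [poissonMass, mul_comm ((r : ℝ) ^ m)]
  rw [← ENNReal.ofReal_tsum_of_nonneg (poissonMass_nonneg hr) hsum.summable, hsum.tsum_eq,
    ENNReal.ofReal_one]

lemma poissonMass_le_one {r : ℝ} (hr : 0 ≤ r) (m : ℕ) : poissonMass r m ≤ 1 := by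
  rw [← ENNReal.ofReal_le_one, ← tsum_ofReal_poissonMass hr]
  exact ENNReal.le_tsum m

lemma poissonMass_le_poissonMass_of_le {r : ℝ} {m n : ℕ} (hmn : m ≤ n) (hnr : n ≤ r) :
    poissonMass r m ≤ poissonMass r n := by
  have hr : 0 ≤ r := n.cast_nonneg.trans hnr
  have hfact : (n ! : ℝ) ≤ m ! * r ^ (n - m) := by
    calc (n ! : ℝ) = m ! * n.descFactorial (n - m) := by
          rw [← Nat.factorial_mul_descFactorial (Nat.sub_le n m), Nat.sub_sub_self hmn,
            Nat.cast_mul]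
      _ ≤ m ! * (n : ℝ) ^ (n - m) := by
          gcongr; exact_mod_cast Nat.descFactorial_le_pow n (n - m)
      _ ≤ m ! * r ^ (n - m) := by gcongr
  unfold poissonMass
  rw [div_le_div_iff₀ (by positivity) (by positivity)]
  calc r ^ m * exp (-r) * n ! ≤ r ^ m * exp (-r) * (m ! * r ^ (n - m)) := by gcongr
    _ = r ^ (m + (n - m)) * exp (-r) * m ! := by rw [pow_add]; ring
    _ = r ^ n * exp (-r) * m ! := by rw [Nat.add_sub_cancel' hmn]

lemma pow_mul_exp_neg_le {r : ℝ} (hr : 0 ≤ r) (m : ℕ) :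
    r ^ m * exp (-r) ≤ (m / exp 1) ^ m := by
  rcases eq_or_ne m 0 with rfl | hm
  · simpa using hr
  have hm' : (m : ℝ) ≠ 0 := Nat.cast_ne_zero.2 hm
  have hratio : r / m ≤ exp (r / m - 1) := by linarith [add_one_le_exp (r / m - 1)]
  calc r ^ m * exp (-r) = (m * (r / m)) ^ m * exp (-r) := by rw [mul_div_cancel₀ _ hm']
    _ ≤ (m * exp (r / m - 1)) ^ m * exp (-r) := by gcongr
    _ = m ^ m * exp (-m) := by
      rw [mul_pow, ← exp_nat_mul, mul_assoc, ← exp_add]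
      congr 2
      field_simp
      ring
    _ = (m / exp 1) ^ m := by rw [div_pow, ← exp_nat_mul, mul_one, exp_neg, div_eq_mul_inv]

lemma poissonMass_le_inv_sqrt_two_pi_mul {r : ℝ} (hr : 0 ≤ r) {m : ℕ} (hm : m ≠ 0) :
    poissonMass r m ≤ (√(2 * π * m))⁻¹ := by
  unfold poissonMass
  rw [← one_div, div_le_div_iff₀ (by positivity) (by positivity), one_mul]
  calc r ^ m * exp (-r) * √(2 * π * m) ≤ (m / exp 1) ^ m * √(2 * π * m) := by
        gcongr; exact pow_mul_exp_neg_le hr m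
    _ ≤ m ! := by rw [mul_comm]; exact Stirling.le_factorial_stirling m

lemma poissonMass_le_inv_sqrt {r : ℝ} (hr : 0 < r) (m : ℕ) : poissonMass r m ≤ (√r)⁻¹ := by
  rcases lt_or_ge r 1 with hr1 | hr1
  · exact (poissonMass_le_one hr.le m).trans
      (one_le_inv₀ (sqrt_pos.2 hr) |>.2 (sqrt_le_one.2 hr1.le))
  -- The mass increases up to `⌊r⌋`, so it suffices to bound it from there on.
  suffices hlarge : ∀ n : ℕ, ⌊r⌋₊ ≤ n → poissonMass r n ≤ (√r)⁻¹ by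
    rcases le_total m ⌊r⌋₊ with hm | hm
    · exact (poissonMass_le_poissonMass_of_le hm (Nat.floor_le hr.le)).trans (hlarge _ le_rfl)
    · exact hlarge m hm
  intro n hn
  have hn1 : 1 ≤ n := ((Nat.one_le_floor_iff r).2 hr1).trans hn
  have hn1' : (1 : ℝ) ≤ n := by exact_mod_cast hn1
  have hrn : r ≤ n + 1 := (Nat.lt_floor_add_one r).le.trans (by gcongr)
  calc poissonMass r n ≤ (√(2 * π * n))⁻¹ :=
        poissonMass_le_inv_sqrt_two_pi_mul hr.le (Nat.one_le_iff_ne_zero.1 hn1)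
    _ ≤ (√r)⁻¹ := by
      gcongr
      nlinarith [pi_gt_three]

lemma poissonMass_eq_exp {r : ℝ} (hr : 0 < r) (m : ℕ) :
    poissonMass r m = exp (m * log r - r - log m !) := by
  have hfact : (0 : ℝ) < m ! := by positivity
  rw [poissonMass, exp_sub, exp_sub, exp_nat_mul, exp_log hr, exp_log hfact, exp_neg,
    ← div_eq_mul_inv]

lemma log_poissonMass {r : ℝ} (hr : 0 < r) (m : ℕ) :
    log (poissonMass r m) = m * log r - r - log m ! := by
  rw [poissonMass_eq_exp hr, log_exp]

lemma poissonMass_rpow_mul_rpow {a b : ℝ} (ha : 0 < a) (hb : 0 < b) (t : ℝ) (m : ℕ) :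
    poissonMass a m ^ t * poissonMass b m ^ (1 - t) =
      exp (-(t * a + (1 - t) * b - a ^ t * b ^ (1 - t))) *
        poissonMass (a ^ t * b ^ (1 - t)) m := by
  have hat := rpow_pos_of_pos ha t
  have hbt := rpow_pos_of_pos hb (1 - t)
  rw [poissonMass_eq_exp ha, poissonMass_eq_exp hb, poissonMass_eq_exp (mul_pos hat hbt),
    log_mul hat.ne' hbt.ne', log_rpow ha, log_rpow hb, ← exp_mul, ← exp_mul, ← exp_add, ← exp_add]
  ring_nf

end PoissonMass

section PoissonPMF

variable {k : ℕ}

lemma poissonPMF_eq_prod (lam : Fin k → ℝ) (x : Fin k → ℕ) :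
    poissonPMF lam x = ∏ i, poissonMass (lam i) (x i) := rfl

lemma poissonPMF_nonneg {lam : Fin k → ℝ} (hlam : ∀ i, 0 ≤ lam i) (x : Fin k → ℕ) :
    0 ≤ poissonPMF lam x :=
  Finset.prod_nonneg fun i _ ↦ poissonMass_nonneg (hlam i) (x i)

lemma poissonPMF_pos {lam : Fin k → ℝ} (hlam : ∀ i, 0 < lam i) (x : Fin k → ℕ) :
    0 < poissonPMF lam x :=
  Finset.prod_pos fun i _ ↦ poissonMass_pos (hlam i) (x i)

lemma poissonPMF_insertNth (lam : Fin (k + 1) → ℝ) (j : Fin (k + 1)) (m : ℕ) (y : Fin k → ℕ) :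
    poissonPMF lam (j.insertNth m y) =
      poissonMass (lam j) m * poissonPMF (fun i ↦ lam (j.succAbove i)) y := by
  simp [poissonPMF_eq_prod, Fin.prod_univ_succAbove _ j]

lemma tsum_eq_tsum_tsum_insertNth {α : Type*} (f : (Fin (k + 1) → α) → ℝ≥0∞) (j : Fin (k + 1)) :
    ∑' x, f x = ∑' y : Fin k → α, ∑' a : α, f (j.insertNth a y) := by
  rw [← (Fin.insertNthEquiv (fun _ ↦ α) j).tsum_eq, ENNReal.tsum_prod', ENNReal.tsum_comm]
  rfl

lemma tsum_ofReal_poissonPMF {lam : Fin k → ℝ} (hlam : ∀ i, 0 ≤ lam i) :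
    ∑' x, ENNReal.ofReal (poissonPMF lam x) = 1 := by
  induction k with
  | zero => simp [poissonPMF]
  | succ k ih =>
    rw [tsum_eq_tsum_tsum_insertNth _ 0]
    simp_rw [poissonPMF_insertNth, ENNReal.ofReal_mul (poissonMass_nonneg (hlam 0) _),
      ENNReal.tsum_mul_right, tsum_ofReal_poissonMass (hlam 0), one_mul]
    exact ih fun i ↦ hlam _

lemma tsum_ofReal_poissonPMF_mul_le {lam : Fin (k + 1) → ℝ} (hlam : ∀ i, 0 ≤ lam i)
    {j : Fin (k + 1)} (hj : 0 < lam j) {g : (Fin (k + 1) → ℕ) → ℝ≥0∞} {B : ℝ≥0∞}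
    (hg : ∀ y : Fin k → ℕ, ∑' m : ℕ, g (j.insertNth m y) ≤ B) :
    ∑' x, ENNReal.ofReal (poissonPMF lam x) * g x ≤ ENNReal.ofReal (√(lam j))⁻¹ * B := by
  set Q : (Fin k → ℕ) → ℝ := poissonPMF fun i ↦ lam (j.succAbove i)
  have hQ (y : Fin k → ℕ) : 0 ≤ Q y := poissonPMF_nonneg (fun i ↦ hlam _) y
  calc ∑' x, ENNReal.ofReal (poissonPMF lam x) * g x
      = ∑' y, ∑' m, ENNReal.ofReal (poissonMass (lam j) m * Q y) * g (j.insertNth m y) := by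
        simp_rw [tsum_eq_tsum_tsum_insertNth _ j, poissonPMF_insertNth, Q]
    _ ≤ ∑' y, ∑' m, ENNReal.ofReal ((√(lam j))⁻¹ * Q y) * g (j.insertNth m y) := by
        gcongr with y m
        · exact hQ y
        · exact poissonMass_le_inv_sqrt hj m
    _ ≤ ∑' y, ENNReal.ofReal ((√(lam j))⁻¹ * Q y) * B := by
        simp_rw [ENNReal.tsum_mul_left]
        gcongr with y
        exact hg y
    _ = ENNReal.ofReal (√(lam j))⁻¹ * B := by
        simp_rw [ENNReal.ofReal_mul (inv_nonneg.2 (sqrt_nonneg _)), ENNReal.tsum_mul_right,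
          ENNReal.tsum_mul_left, Q, tsum_ofReal_poissonPMF (fun _ ↦ hlam _), mul_one]

lemma tsum_ofReal_poissonPMF_mul_exp_neg_abs_le {lam : Fin k → ℝ} (hlam : ∀ i, 0 ≤ lam i)
    {j : Fin k} (hj : 0 < lam j) {b : Fin k → ℝ} (hb : b j ≠ 0) (s : ℝ) :
    ∑' x : Fin k → ℕ, ENNReal.ofReal (poissonPMF lam x * exp (-|∑ i, x i * b i + s|)) ≤
      ENNReal.ofReal ((√(lam j))⁻¹ * (2 / (1 - exp (-|b j|)))) := by
  obtain _ | k := k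
  · exact j.elim0
  simp_rw [ENNReal.ofReal_mul (poissonPMF_nonneg hlam _)]
  rw [ENNReal.ofReal_mul (inv_nonneg.2 (sqrt_nonneg _))]
  refine tsum_ofReal_poissonPMF_mul_le hlam hj fun y ↦ ?_
  simp_rw [Fin.sum_univ_succAbove _ j, Fin.insertNth_apply_same, Fin.insertNth_apply_succAbove,
    add_assoc]
  exact (ENNReal.tsum_comp_le_tsum_of_injective Nat.cast_injective
    fun z : ℤ ↦ ENNReal.ofReal (exp (-|z * b j + _|))).trans (tsum_int_ofReal_exp_neg_abs_le hb _)

lemma log_poissonPMF_sub_log_poissonPMF {μ ν : Fin k → ℝ} (hμ : ∀ i, 0 < μ i) (hν : ∀ i, 0 < ν i)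
    (x : Fin k → ℕ) :
    log (poissonPMF μ x) - log (poissonPMF ν x) =
      ∑ i, x i * (log (μ i) - log (ν i)) - ∑ i, (μ i - ν i) := by
  simp_rw [poissonPMF_eq_prod]
  rw [log_prod fun i _ ↦ (poissonMass_pos (hμ i) _).ne',
    log_prod fun i _ ↦ (poissonMass_pos (hν i) _).ne', ← Finset.sum_sub_distrib,
    ← Finset.sum_sub_distrib]
  refine Finset.sum_congr rfl fun i _ ↦ ?_
  rw [log_poissonMass (hμ i), log_poissonMass (hν i)]
  ring

end PoissonPMF

section Tilting

variable {k : ℕ} {μ ν : Fin k → ℝ}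

/-- The entrywise weighted geometric mean `μ ^ t * ν ^ (1 - t)` of two vectors. -/
noncomputable def geomMean (t : ℝ) (μ ν : Fin k → ℝ) (i : Fin k) : ℝ :=
  μ i ^ t * ν i ^ (1 - t)

/-- The Chernoff exponent of weight `t` of two vectors of Poisson rates: the function of `t` that
`CHdiv` maximises over `[0, 1]`. -/
noncomputable def chExponent (t : ℝ) (μ ν : Fin k → ℝ) : ℝ :=
  ∑ i, (t * μ i + (1 - t) * ν i - geomMean t μ ν i)

lemma geomMean_pos (hμ : ∀ i, 0 < μ i) (hν : ∀ i, 0 < ν i) (t : ℝ) (i : Fin k) :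
    0 < geomMean t μ ν i :=
  mul_pos (rpow_pos_of_pos (hμ i) t) (rpow_pos_of_pos (hν i) (1 - t))

lemma geomMean_mul_right (hμ : ∀ i, 0 ≤ μ i) (hν : ∀ i, 0 ≤ ν i) {r : ℝ} (hr : 0 < r) (t : ℝ)
    (i : Fin k) :
    geomMean t (fun i ↦ μ i * r) (fun i ↦ ν i * r) i = geomMean t μ ν i * r := by
  have hrr : r ^ t * r ^ (1 - t) = r := by rw [← rpow_add hr, add_sub_cancel, rpow_one]
  simp only [geomMean, mul_rpow (hμ i) hr.le, mul_rpow (hν i) hr.le]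
  linear_combination (μ i ^ t * ν i ^ (1 - t)) * hrr

lemma chExponent_mul_right (hμ : ∀ i, 0 ≤ μ i) (hν : ∀ i, 0 ≤ ν i) {r : ℝ} (hr : 0 < r) (t : ℝ) :
    chExponent t (fun i ↦ μ i * r) (fun i ↦ ν i * r) = chExponent t μ ν * r := by
  simp_rw [chExponent, geomMean_mul_right hμ hν hr, Finset.sum_mul]
  exact Finset.sum_congr rfl fun i _ ↦ by ring

lemma poissonPMF_rpow_mul_rpow (hμ : ∀ i, 0 < μ i) (hν : ∀ i, 0 < ν i) (t : ℝ) (x : Fin k → ℕ) :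
    poissonPMF μ x ^ t * poissonPMF ν x ^ (1 - t) =
      exp (-chExponent t μ ν) * poissonPMF (geomMean t μ ν) x := by
  simp_rw [poissonPMF_eq_prod]
  rw [← finsetProd_rpow _ _ fun i _ ↦ (poissonMass_pos (hμ i) _).le,
    ← finsetProd_rpow _ _ fun i _ ↦ (poissonMass_pos (hν i) _).le, ← Finset.prod_mul_distrib,
    chExponent, ← Finset.sum_neg_distrib, exp_sum, ← Finset.prod_mul_distrib]
  exact Finset.prod_congr rfl fun i _ ↦ poissonMass_rpow_mul_rpow (hμ i) (hν i) t (x i)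

lemma min_le_rpow_mul_rpow_mul_exp_neg {u v : ℝ} (hu : 0 < u) (hv : 0 < v) (t : ℝ) :
    min u v ≤ u ^ t * v ^ (1 - t) * exp (-(min t (1 - t) * |log u - log v|)) := by
  have hrhs : u ^ t * v ^ (1 - t) = exp (t * log u + (1 - t) * log v) := by
    rw [rpow_def_of_pos hu, rpow_def_of_pos hv, ← exp_add]
    ring_nf
  rw [hrhs, ← exp_add]
  rcases le_total u v with huv | hvu
  · rw [min_eq_left huv, abs_of_nonpos (sub_nonpos.2 (log_le_log hu huv)), ← log_le_iff_le_exp hu]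
    nlinarith [min_le_right t (1 - t), log_le_log hu huv]
  · rw [min_eq_right hvu, abs_of_nonneg (sub_nonneg.2 (log_le_log hv hvu)),
      ← log_le_iff_le_exp hv]
    nlinarith [min_le_left t (1 - t), log_le_log hv hvu]

lemma min_poissonPMF_le (hμ : ∀ i, 0 < μ i) (hν : ∀ i, 0 < ν i) {p q : ℝ} (hp : 0 < p)
    (hq : 0 < q) (t : ℝ) (x : Fin k → ℕ) :
    min (p * poissonPMF μ x) (q * poissonPMF ν x) ≤
      p ^ t * q ^ (1 - t) * exp (-chExponent t μ ν) * (poissonPMF (geomMean t μ ν) x *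
        exp (-(min t (1 - t) * |∑ i, x i * (log (μ i) - log (ν i)) +
          (log p - log q - ∑ i, (μ i - ν i))|))) := by
  have hP := poissonPMF_pos hμ x
  have hQ := poissonPMF_pos hν x
  refine (min_le_rpow_mul_rpow_mul_exp_neg (mul_pos hp hP) (mul_pos hq hQ) t).trans_eq ?_
  have hlog : log (p * poissonPMF μ x) - log (q * poissonPMF ν x) =
      ∑ i, x i * (log (μ i) - log (ν i)) + (log p - log q - ∑ i, (μ i - ν i)) := by
    rw [log_mul hp.ne' hP.ne', log_mul hq.ne' hQ.ne']
    linear_combination log_poissonPMF_sub_log_poissonPMF hμ hν x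
  rw [hlog, mul_rpow hp.le hP.le, mul_rpow hq.le hQ.le, mul_mul_mul_comm,
    poissonPMF_rpow_mul_rpow hμ hν]
  ring

lemma min_mul_log_sub_log_ne_zero {a b : ℝ} (ha : 0 < a) (hb : 0 < b) (hab : a ≠ b) {t : ℝ}
    (ht : t ∈ Set.Ioo 0 1) : min t (1 - t) * (log a - log b) ≠ 0 :=
  mul_ne_zero (lt_min ht.1 (sub_pos.2 ht.2)).ne'
    (sub_ne_zero.2 fun h ↦ hab (log_injOn_pos ha hb h))

theorem tsum_min_poissonPMF_le (hμ : ∀ i, 0 < μ i) (hν : ∀ i, 0 < ν i) {j : Fin k}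
    (hj : μ j ≠ ν j) {p q : ℝ} (hp : 0 < p) (hq : 0 < q) {t : ℝ} (ht : t ∈ Set.Ioo 0 1) :
    ∑' x, min (p * poissonPMF μ x) (q * poissonPMF ν x) ≤
      p ^ t * q ^ (1 - t) * exp (-chExponent t μ ν) * ((√(geomMean t μ ν j))⁻¹ *
        (2 / (1 - exp (-|min t (1 - t) * (log (μ j) - log (ν j))|)))) := by
  have hδ : 0 < min t (1 - t) := lt_min ht.1 (sub_pos.2 ht.2)
  have hb := min_mul_log_sub_log_ne_zero (hμ j) (hν j) hj ht
  set δ := min t (1 - t)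
  have hA : 0 ≤ p ^ t * q ^ (1 - t) * exp (-chExponent t μ ν) := by positivity
  refine tsum_le_of_tsum_ofReal_le
    (fun x ↦ le_min (mul_pos hp (poissonPMF_pos hμ x)).le (mul_pos hq (poissonPMF_pos hν x)).le)
    (mul_nonneg hA (mul_nonneg (by positivity)
      (div_nonneg zero_le_two (sub_pos.2 (exp_neg_abs_lt_one hb)).le))) ?_
  have hlinear (x : Fin k → ℕ) (s : ℝ) : δ * |∑ i, x i * (log (μ i) - log (ν i)) + s| =
      |∑ i, x i * (δ * (log (μ i) - log (ν i))) + δ * s| := by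
    simp_rw [mul_left_comm _ δ, ← Finset.mul_sum, ← mul_add, abs_mul, abs_of_pos hδ]
  calc
    _ ≤ ∑' x, ENNReal.ofReal (p ^ t * q ^ (1 - t) * exp (-chExponent t μ ν)) *
        ENNReal.ofReal (poissonPMF (geomMean t μ ν) x *
          exp (-|∑ i, x i * (δ * (log (μ i) - log (ν i))) +
            δ * (log p - log q - ∑ i, (μ i - ν i))|)) := by
      gcongr with x
      rw [← ENNReal.ofReal_mul hA, ← hlinear]
      exact ENNReal.ofReal_le_ofReal (min_poissonPMF_le hμ hν hp hq t x)
    _ ≤ _ := by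
      rw [ENNReal.tsum_mul_left, ENNReal.ofReal_mul hA]
      gcongr
      exact tsum_ofReal_poissonPMF_mul_exp_neg_abs_le (fun i ↦ (geomMean_pos hμ hν t i).le)
        (geomMean_pos hμ hν t j) hb _

lemma tsum_min_poissonPMF_mul_right_le (hμ : ∀ i, 0 < μ i) (hν : ∀ i, 0 < ν i) {j : Fin k}
    (hj : μ j ≠ ν j) {p q : ℝ} (hp : 0 < p) (hq : 0 < q) {t : ℝ} (ht : t ∈ Set.Ioo 0 1) {r : ℝ}
    (hr : 0 < r) :
    ∑' x, min (p * poissonPMF (fun i ↦ μ i * r) x) (q * poissonPMF (fun i ↦ ν i * r) x) ≤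
      p ^ t * q ^ (1 - t) * exp (-(chExponent t μ ν * r)) *
        ((√(geomMean t μ ν j))⁻¹ * (√r)⁻¹ *
          (2 / (1 - exp (-|min t (1 - t) * (log (μ j) - log (ν j))|)))) := by
  have hbound := tsum_min_poissonPMF_le (fun i ↦ mul_pos (hμ i) hr) (fun i ↦ mul_pos (hν i) hr)
    (mul_left_injective₀ hr.ne' |>.ne hj) hp hq ht
  rwa [chExponent_mul_right (fun i ↦ (hμ i).le) (fun i ↦ (hν i).le) hr,
    geomMean_mul_right (fun i ↦ (hμ i).le) (fun i ↦ (hν i).le) hr,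
    log_mul (hμ j).ne' hr.ne', log_mul (hν j).ne' hr.ne', add_sub_add_right_eq_sub,
    sqrt_mul (geomMean_pos hμ hν t j).le, mul_inv] at hbound

end Tilting

section CHDivergence

variable {k : ℕ} {μ ν : Fin k → ℝ}

lemma chExponent_zero (μ ν : Fin k → ℝ) : chExponent 0 μ ν = 0 := by
  simp [chExponent, geomMean]

lemma chExponent_one (μ ν : Fin k → ℝ) : chExponent 1 μ ν = 0 := by
  simp [chExponent, geomMean]

lemma continuous_chExponent (hμ : ∀ i, 0 < μ i) (hν : ∀ i, 0 < ν i) :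
    Continuous fun t ↦ chExponent t μ ν := by
  unfold chExponent geomMean
  have hμ_cont (i : Fin k) : Continuous fun t : ℝ ↦ μ i ^ t :=
    continuous_const_rpow (hμ i).ne'
  have hν_cont (i : Fin k) : Continuous fun t : ℝ ↦ ν i ^ (1 - t) :=
    (continuous_const_rpow (hν i).ne').comp (by fun_prop)
  fun_prop

lemma chExponent_half (hμ : ∀ i, 0 ≤ μ i) (hν : ∀ i, 0 ≤ ν i) :
    chExponent (1 / 2) μ ν = ∑ i, (√(μ i) - √(ν i)) ^ 2 / 2 := by
  refine Finset.sum_congr rfl fun i _ ↦ ?_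
  rw [geomMean, show (1 - 1 / 2 : ℝ) = 1 / 2 by norm_num, ← sqrt_eq_rpow, ← sqrt_eq_rpow]
  linear_combination -(sq_sqrt (hμ i)) / 2 - sq_sqrt (hν i) / 2

lemma chExponent_half_pos (hμ : ∀ i, 0 ≤ μ i) (hν : ∀ i, 0 ≤ ν i) (hne : μ ≠ ν) :
    0 < chExponent (1 / 2) μ ν := by
  obtain ⟨j, hj⟩ := Function.ne_iff.1 hne
  have hsqrt : √(μ j) - √(ν j) ≠ 0 :=
    sub_ne_zero.2 fun h ↦ hj ((sqrt_inj (hμ j) (hν j)).1 h)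
  rw [chExponent_half hμ hν]
  exact Finset.sum_pos' (fun i _ ↦ by positivity) ⟨j, Finset.mem_univ j, by positivity⟩

lemma exists_mem_Ioo_CHdiv_eq (hμ : ∀ i, 0 < μ i) (hν : ∀ i, 0 < ν i) (hne : μ ≠ ν) :
    ∃ t ∈ Set.Ioo (0 : ℝ) 1, CHdiv μ ν = chExponent t μ ν := by
  obtain ⟨t, ht, hmax⟩ := isCompact_Icc.exists_isMaxOn (Set.nonempty_Icc.2 zero_le_one)
    (continuous_chExponent hμ hν).continuousOn
  have hpos : 0 < chExponent t μ ν :=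
    (chExponent_half_pos (fun i ↦ (hμ i).le) (fun i ↦ (hν i).le) hne).trans_le
      (hmax ⟨by norm_num, by norm_num⟩)
  have ht0 : t ≠ 0 := by rintro rfl; exact hpos.ne' (chExponent_zero μ ν)
  have ht1 : t ≠ 1 := by rintro rfl; exact hpos.ne' (chExponent_one μ ν)
  have hgreatest : IsGreatest ((fun t ↦ chExponent t μ ν) '' Set.Icc 0 1) (chExponent t μ ν) :=
    ⟨⟨t, ht, rfl⟩, Set.forall_mem_image.2 fun _ hu ↦ hmax hu⟩
  exact ⟨t, ⟨ht.1.lt_of_ne' ht0, ht.2.lt_of_ne ht1⟩, hgreatest.csSup_eq⟩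

end CHDivergence

theorem statement_0_general {k : ℕ} {c₁ c₂ : Fin k → ℝ} (hc₁ : ∀ i, 0 < c₁ i)
    (hc₂ : ∀ i, 0 < c₂ i) (hne : c₁ ≠ c₂) {p₁ p₂ : ℝ} (hp₁ : 0 < p₁) (hp₂ : 0 < p₂) :
    ∃ C : ℝ, 0 < C ∧ ∀ n : ℝ, 1 < n →
      (∑' x : Fin k → ℕ,
          min (p₁ * poissonPMF (fun i ↦ c₁ i * log n) x)
              (p₂ * poissonPMF (fun i ↦ c₂ i * log n) x))
        ≤ C * n ^ (-CHdiv c₁ c₂) * log n ^ (-(1 / 2) : ℝ) := by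
  obtain ⟨t, ht, hD⟩ := exists_mem_Ioo_CHdiv_eq hc₁ hc₂ hne
  obtain ⟨j, hj⟩ := Function.ne_iff.1 hne
  have hgap : 0 < 1 - exp (-|min t (1 - t) * (log (c₁ j) - log (c₂ j))|) :=
    sub_pos.2 (exp_neg_abs_lt_one (min_mul_log_sub_log_ne_zero (hc₁ j) (hc₂ j) hj ht))
  have hmean : 0 < geomMean t c₁ c₂ j := geomMean_pos hc₁ hc₂ t j
  refine ⟨p₁ ^ t * p₂ ^ (1 - t) * ((√(geomMean t c₁ c₂ j))⁻¹ *
    (2 / (1 - exp (-|min t (1 - t) * (log (c₁ j) - log (c₂ j))|)))), by positivity, fun n hn ↦ ?_⟩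
  have hL : 0 < log n := log_pos hn
  refine (tsum_min_poissonPMF_mul_right_le hc₁ hc₂ hj hp₁ hp₂ ht hL).trans_eq ?_
  rw [← hD, rpow_def_of_pos (zero_lt_one.trans hn), rpow_neg hL.le, ← sqrt_eq_rpow, mul_neg,
    mul_comm (log n)]
  ring

theorem statement_0 (k : ℕ) (hk : 1 ≤ k) (c₁ c₂ : Fin k → ℝ)
    (hc₁ : ∀ i, 0 < c₁ i) (hc₂ : ∀ i, 0 < c₂ i) (hne : c₁ ≠ c₂)
    (p₁ p₂ : ℝ) (hp₁ : 0 < p₁) (hp₂ : 0 < p₂) :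
    ∃ C : ℝ, 0 < C ∧ ∃ n₀ : ℕ, ∀ n : ℕ, n₀ ≤ n →
      (∑' x : Fin k → ℕ,
          min (p₁ * poissonPMF (fun i => c₁ i * Real.log n) x)
              (p₂ * poissonPMF (fun i => c₂ i * Real.log n) x))
        ≤ C * (n : ℝ) ^ (-CHdiv c₁ c₂) * Real.log n ^ (-(1 / 2) : ℝ) := by
  obtain ⟨C, hC, hbound⟩ := statement_0_general hc₁ hc₂ hne hp₁ hp₂
  exact ⟨C, hC, 2, fun n hn ↦ hbound n (Nat.one_lt_cast.2 hn)⟩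
end

section
/- Let X be a countable set, k ≥ 2, let P₁,...,P_k : X → [0,1] be probability mass functions on X, and let p₁,...,p_k > 0 with ∑_{j=1}^k p_j = 1. Let f : X → {1,...,k} be any maximum-a-posteriori rule, i.e., p_{f(x)} P_{f(x)}(x) = max_{j} p_j P_j(x) for every x ∈ X. Then the error probability ∑_{i=1}^k p_i ∑_{x : f(x) ≠ i} P_i(x) is at most ∑_{1 ≤ i < j ≤ k} ∑_{x ∈ X} min(p_i P_i(x), p_j P_j(x)). -/
open scoped BigOperators

section Finite

variable {ι M : Type*} [Fintype ι] [LinearOrder ι]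

/- The pairs `{i, m}` with `i ≠ m` are pairwise distinct, so each term on the left occurs
separately on the right, at the increasing ordering of its pair. -/
lemma sum_ne_le_sum_sum_lt [AddCommMonoid M] [PartialOrder M] [IsOrderedAddMonoid M]
    {g : ι → ι → M} (hg_nonneg : ∀ i j, 0 ≤ g i j) (hg_symm : ∀ i j, g i j = g j i) (m : ι) :
    ∑ i with m ≠ i, g i m ≤ ∑ i, ∑ j with i < j, g i j := by
  let orderedPair (i : ι) : (_ : ι) × ι := ⟨min i m, max i m⟩
  have orderedPair_injective : Function.Injective orderedPair := by
    intro i j h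
    simp only [orderedPair, Sigma.mk.injEq, heq_eq_eq] at h
    grind
  have apply_orderedPair (i : ι) : g (orderedPair i).1 (orderedPair i).2 = g i m := by
    rcases le_total i m with him | hmi
    · simp only [orderedPair, min_eq_left him, max_eq_right him]
    · simp only [orderedPair, min_eq_right hmi, max_eq_left hmi, hg_symm m i]
  calc ∑ i with m ≠ i, g i m
      = ∑ q ∈ (Finset.univ.filter (m ≠ ·)).image orderedPair, g q.1 q.2 := by
        rw [Finset.sum_image orderedPair_injective.injOn]
        simp only [apply_orderedPair]
    _ ≤ ∑ q ∈ Finset.univ.sigma fun i ↦ Finset.univ.filter (i < ·), g q.1 q.2 := by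
        refine Finset.sum_le_sum_of_subset_of_nonneg ?_ fun q _ _ ↦ hg_nonneg q.1 q.2
        exact Finset.image_subset_iff.2 fun i hi ↦ by simpa [orderedPair, eq_comm] using hi
    _ = ∑ i, ∑ j with i < j, g i j := Finset.sum_sigma _ _ _

lemma sum_ne_argmax_le_sum_sum_lt_min [AddCommMonoid M] [LinearOrder M] [IsOrderedAddMonoid M]
    {a : ι → M} (ha : ∀ i, 0 ≤ a i) {m : ι} (hm : ∀ i, a i ≤ a m) :
    ∑ i with m ≠ i, a i ≤ ∑ i, ∑ j with i < j, min (a i) (a j) := by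
  simpa only [min_eq_left (hm _)] using
    sum_ne_le_sum_sum_lt (fun i j ↦ le_min (ha i) (ha j)) (fun i j ↦ min_comm (a i) (a j)) m

end Finite

lemma summable_of_tsum_ne_zero {X M : Type*} [AddCommMonoid M] [TopologicalSpace M] {u : X → M}
    (hu : ∑' x, u x ≠ 0) : Summable u :=
  by_contra fun h ↦ hu (tsum_eq_zero_of_not_summable h)

lemma summable_min {X : Type*} {u v : X → ℝ} (hu_nonneg : 0 ≤ u) (hv_nonneg : 0 ≤ v)
    (hu : Summable u) : Summable fun x ↦ min (u x) (v x) :=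
  .of_nonneg_of_le (fun x ↦ le_min (hu_nonneg x) (hv_nonneg x)) (fun _ ↦ min_le_left _ _) hu

theorem statement_7_general {X ι : Type*} [Fintype ι] [LinearOrder ι] {w : ι → X → ℝ}
    (hw_nonneg : ∀ i x, 0 ≤ w i x) (hw : ∀ i, Summable (w i))
    {f : X → ι} (hf : ∀ x i, w i x ≤ w (f x) x) :
    ∑ i, ∑' x, (if f x ≠ i then w i x else 0)
      ≤ ∑ i, ∑ j, if i < j then ∑' x, min (w i x) (w j x) else 0 := by
  have summable_error (i : ι) : Summable fun x ↦ if f x ≠ i then w i x else 0 :=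
    ((hw i).indicator {x | f x ≠ i}).congr fun x ↦ by simp [Set.indicator_apply]
  have summable_overlap (i j : ι) : Summable fun x ↦ min (w i x) (w j x) :=
    summable_min (hw_nonneg i) (hw_nonneg j) (hw i)
  have summable_overlaps (i : ι) : Summable fun x ↦ ∑ j with i < j, min (w i x) (w j x) :=
    summable_sum fun j _ ↦ summable_overlap i j
  calc ∑ i, ∑' x, (if f x ≠ i then w i x else 0)
      = ∑' x, ∑ i with f x ≠ i, w i x := by
        simp only [Finset.sum_filter, Summable.tsum_finsetSum fun i _ ↦ summable_error i]
    _ ≤ ∑' x, ∑ i, ∑ j with i < j, min (w i x) (w j x) := by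
        refine Summable.tsum_le_tsum
          (fun x ↦ sum_ne_argmax_le_sum_sum_lt_min (hw_nonneg · x) (hf x)) ?_
          (summable_sum fun i _ ↦ summable_overlaps i)
        simpa only [Finset.sum_filter] using summable_sum fun i _ ↦ summable_error i
    _ = ∑ i, ∑ j with i < j, ∑' x, min (w i x) (w j x) := by
        rw [Summable.tsum_finsetSum fun i _ ↦ summable_overlaps i]
        simp only [Summable.tsum_finsetSum fun j _ ↦ summable_overlap _ j]
    _ = ∑ i, ∑ j, if i < j then ∑' x, min (w i x) (w j x) else 0 := by
        simp only [Finset.sum_filter]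

theorem statement_7 (X : Type*) [Countable X] (k : ℕ) (hk : 2 ≤ k)
    (P : Fin k → X → ℝ) (hP0 : ∀ j x, 0 ≤ P j x) (hP1 : ∀ j x, P j x ≤ 1)
    (hPsum : ∀ j, ∑' x, P j x = 1)
    (p : Fin k → ℝ) (hp : ∀ j, 0 < p j) (hpsum : ∑ j, p j = 1)
    (f : X → Fin k) (hf : ∀ x j, p j * P j x ≤ p (f x) * P (f x) x) :
    ∑ i, p i * ∑' x, (if f x ≠ i then P i x else 0)
      ≤ ∑ i, ∑ j, if i < j then ∑' x, min (p i * P i x) (p j * P j x) else 0 := by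
  have hP (j : Fin k) : Summable (P j) :=
    summable_of_tsum_ne_zero (hPsum j ▸ one_ne_zero)
  simpa only [← tsum_mul_left, mul_ite, mul_zero] using
    statement_7_general (fun j x ↦ mul_nonneg (hp j).le (hP0 j x))
      (fun j ↦ (hP j).mul_left (p j)) hf
end

section
/- Let p ∈ ℝ^k have all entries positive with ∑_{i=1}^k p_i = 1, let P = diag(p), and let Q be a symmetric k×k real matrix. Suppose p = ∑_{i=1}^h w_i where each w_i ∈ ℝ^k satisfies PQ w_i = λ_i w_i for pairwise distinct real numbers λ₁,...,λ_h. Then ∑_{i=1}^h w_i · (P⁻¹ w_i) = 1. -/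
open scoped BigOperators

/-!
Since `P` and `Q` are symmetric, `P * Q` is self-adjoint for the bilinear form `x · P⁻¹ y`, so its
eigenvectors `w i`, having distinct eigenvalues, are orthogonal for this form. Pythagoras then gives
`∑ i, w i · P⁻¹ (w i) = p · P⁻¹ p`, and the right-hand side is `∑ j, p j` because `P⁻¹ p` is the
all-ones vector.
-/

section BilinearMap

variable {R M N ι : Type*} [AddCommMonoid M]

theorem isOrthoᵢ_of_isSelfAdjoint_of_eigenvectors [CommRing R] [IsDomain R] [Module R M]
    [AddCommGroup N] [Module R N] [Module.IsTorsionFree R N] {B : M →ₗ[R] M →ₗ[R] N} {w : ι → M}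
    {f : M → M} (hf : B.IsSelfAdjoint f) {lam : ι → R} (hlam : Function.Injective lam)
    (hw : ∀ i, f (w i) = lam i • w i) : B.IsOrthoᵢ w := by
  refine LinearMap.isOrthoᵢ_def.mpr fun i j hij => ?_
  have smul_eq_smul : lam i • B (w i) (w j) = lam j • B (w i) (w j) :=
    calc lam i • B (w i) (w j) = B (f (w i)) (w j) := by rw [hw, map_smul, LinearMap.smul_apply]
      _ = B (w i) (f (w j)) := hf (w i) (w j)
      _ = lam j • B (w i) (w j) := by rw [hw, map_smul]
  by_contra hne
  exact hij (hlam (smul_left_injective R hne smul_eq_smul))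

theorem sum_apply_self_eq_of_isOrthoᵢ [CommSemiring R] [Module R M] [AddCommMonoid N]
    [Module R N] [Fintype ι] {B : M →ₗ[R] M →ₗ[R] N} {w : ι → M} (hw : B.IsOrthoᵢ w) :
    ∑ i, B (w i) (w i) = B (∑ i, w i) (∑ i, w i) := by
  rw [LinearMap.map_sum₂]
  refine Finset.sum_congr rfl fun i _ => ?_
  rw [map_sum]
  exact (Fintype.sum_eq_single i fun j hji => LinearMap.isOrthoᵢ_def.mp hw i j hji.symm).symm

end BilinearMap

section Matrix

open Matrix

variable {n : Type*} [Fintype n] [DecidableEq n]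

theorem isSelfAdjoint_inv_mul_of_isSymm {R : Type*} [CommRing R] {P Q : Matrix n n R}
    (hP : P.IsSymm) (hPdet : IsUnit P.det) (hQ : Q.IsSymm) : P⁻¹.IsSelfAdjoint (P * Q) := by
  change (P * Q)ᵀ * P⁻¹ = P⁻¹ * (P * Q)
  rw [transpose_mul, hP.eq, hQ.eq, mul_nonsing_inv_cancel_right P Q hPdet,
    nonsing_inv_mul_cancel_left P Q hPdet]

variable {R ι : Type*} [CommRing R] [IsDomain R] [Fintype ι]

theorem sum_dotProduct_inv_mulVec_of_eigenvectors {P Q : Matrix n n R} (hP : P.IsSymm)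
    (hPdet : IsUnit P.det) (hQ : Q.IsSymm) {w : ι → n → R} {lam : ι → R}
    (hlam : Function.Injective lam) (heig : ∀ i, (P * Q) *ᵥ w i = lam i • w i) :
    ∑ i, w i ⬝ᵥ P⁻¹ *ᵥ w i = (∑ i, w i) ⬝ᵥ P⁻¹ *ᵥ ∑ i, w i := by
  have selfAdjoint : (toLinearMap₂' R P⁻¹).IsSelfAdjoint (toLin' (P * Q)) :=
    (isAdjointPair_toLinearMap₂' ..).mpr (isSelfAdjoint_inv_mul_of_isSymm hP hPdet hQ)
  have orthogonal : (toLinearMap₂' R P⁻¹).IsOrthoᵢ w :=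
    isOrthoᵢ_of_isSelfAdjoint_of_eigenvectors selfAdjoint hlam heig
  simpa only [toLinearMap₂'_apply'] using sum_apply_self_eq_of_isOrthoᵢ orthogonal

variable {K : Type*} [Field K] {p : n → K}

theorem inv_diagonal_mulVec (hp : ∀ j, p j ≠ 0) (x : n → K) : (diagonal p)⁻¹ *ᵥ x = x / p := by
  have diagonal_inv : (diagonal p)⁻¹ = diagonal p⁻¹ :=
    inv_eq_left_inv (by simp [diagonal_mul_diagonal, hp])
  ext j
  rw [diagonal_inv, mulVec_diagonal, Pi.inv_apply, Pi.div_apply, inv_mul_eq_div]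

theorem statement_11_general (hp : ∀ j, p j ≠ 0) {Q : Matrix n n K} (hQ : Q.IsSymm)
    {w : ι → n → K} {lam : ι → K} (hlam : Function.Injective lam) (hdecomp : p = ∑ i, w i)
    (heig : ∀ i, (diagonal p * Q) *ᵥ w i = lam i • w i) :
    ∑ i, ∑ j, w i j * w i j / p j = ∑ j, p j := by
  have det_isUnit : IsUnit (diagonal p).det := by
    simpa only [det_diagonal, isUnit_iff_ne_zero, Finset.prod_ne_zero_iff] using fun j _ => hp j
  calc ∑ i, ∑ j, w i j * w i j / p j
      = ∑ i, w i ⬝ᵥ (diagonal p)⁻¹ *ᵥ w i := by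
        simp only [inv_diagonal_mulVec hp, dotProduct, Pi.div_apply, mul_div_assoc]
    _ = p ⬝ᵥ (diagonal p)⁻¹ *ᵥ p := by
        rw [sum_dotProduct_inv_mulVec_of_eigenvectors (isSymm_diagonal p) det_isUnit hQ hlam heig,
          ← hdecomp]
    _ = ∑ j, p j := by
        simp only [inv_diagonal_mulVec hp, dotProduct, Pi.div_apply, div_self (hp _), mul_one]

end Matrix

theorem statement_11 (k h : ℕ) (p : Fin k → ℝ) (hp : ∀ i, 0 < p i) (hpsum : ∑ i, p i = 1)
    (Q : Matrix (Fin k) (Fin k) ℝ) (hQ : Q.IsSymm)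
    (w : Fin h → Fin k → ℝ) (lam : Fin h → ℝ) (hlam : Function.Injective lam)
    (hdecomp : p = ∑ i, w i)
    (heig : ∀ i, (Matrix.diagonal p * Q).mulVec (w i) = lam i • w i) :
    ∑ i, ∑ j, w i j * w i j / p j = 1 :=
  (statement_11_general (fun j => (hp j).ne') hQ hlam hdecomp heig).trans hpsum
end

section
/- Let p ∈ ℝ^k have all entries positive, let P = diag(p), and let Q be a symmetric k×k real matrix. Let a, b ∈ {1,...,k} and suppose e_a − e_b = ∑_{i=1}^h d_i where PQ d_i = λ_i d_i for pairwise distinct real numbers λ₁,...,λ_h. Then d_i · (P⁻¹ d_i) ≥ 0 for every i; moreover, if the a-th and b-th rows of Q are not equal, then there exists an index i with λ_i ≠ 0 and d_i · (P⁻¹ d_i) > 0. -/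
open scoped BigOperators
open scoped Matrix

/-!
If every `d i` with `lam i ≠ 0` vanished, then `P Q v = ∑ i, lam i • d i = 0` for `v = ∑ i, d i`,
and `Q v = 0` because `P` is invertible. For `v = e_a - e_b` and `Q` symmetric, `Q v` is the
difference of the `a`-th and `b`-th rows of `Q`.
-/

theorem exists_eigenvalue_ne_zero_of_map_sum_ne_zero {R M ι : Type*} [Semiring R]
    [AddCommMonoid M] [Module R M] [Fintype ι] {f : M →ₗ[R] M} {d : ι → M} {lam : ι → R}
    (heig : ∀ i, f (d i) = lam i • d i) (hf : f (∑ i, d i) ≠ 0) :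
    ∃ i, lam i ≠ 0 ∧ d i ≠ 0 := by
  have hsum : ∑ i, lam i • d i ≠ 0 := by simpa only [map_sum, heig] using hf
  obtain ⟨i, -, hi⟩ := Finset.exists_ne_zero_of_sum_ne_zero hsum
  exact ⟨i, left_ne_zero_of_smul hi, right_ne_zero_of_smul hi⟩

theorem diagonal_mulVec_ne_zero {n R : Type*} [Fintype n] [DecidableEq n]
    [NonUnitalNonAssocSemiring R] [NoZeroDivisors R] {p v : n → R}
    (hp : ∀ j, p j ≠ 0) (hv : v ≠ 0) : Matrix.diagonal p *ᵥ v ≠ 0 := by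
  obtain ⟨j, hj⟩ := Function.ne_iff.mp hv
  refine Function.ne_iff.mpr ⟨j, ?_⟩
  rw [Matrix.mulVec_diagonal]
  exact mul_ne_zero (hp j) hj

theorem mulVec_single_sub_single_of_isSymm {n R : Type*} [Fintype n] [DecidableEq n]
    [NonAssocRing R] {Q : Matrix n n R} (hQ : Q.IsSymm) (a b : n) :
    Q *ᵥ (Pi.single a 1 - Pi.single b 1) = Q.row a - Q.row b := by
  rw [Matrix.mulVec_sub, Matrix.mulVec_single_one, Matrix.mulVec_single_one,
    ← Matrix.row_transpose, hQ.eq]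

section OrderedField

variable {n ι R : Type*} [Fintype n] [Field R] [LinearOrder R] [IsStrictOrderedRing R]

theorem sum_mul_self_div_nonneg {p : n → R} (hp : ∀ j, 0 ≤ p j) (x : n → R) :
    0 ≤ ∑ j, x j * x j / p j :=
  Finset.sum_nonneg fun j _ => div_nonneg (mul_self_nonneg (x j)) (hp j)

theorem sum_mul_self_div_pos {p x : n → R} (hp : ∀ j, 0 < p j) (hx : x ≠ 0) :
    0 < ∑ j, x j * x j / p j := by
  obtain ⟨j, hj⟩ := Function.ne_iff.mp hx
  exact Finset.sum_pos' (fun i _ => div_nonneg (mul_self_nonneg (x i)) (hp i).le)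
    ⟨j, Finset.mem_univ j, div_pos (mul_self_pos.mpr hj) (hp j)⟩

theorem statement_13_general [Fintype ι] [DecidableEq n] {p : n → R} (hp : ∀ j, 0 < p j)
    {Q : Matrix n n R} {v : n → R} {d : ι → n → R} {lam : ι → R} (hdecomp : v = ∑ i, d i)
    (heig : ∀ i, (Matrix.diagonal p * Q) *ᵥ d i = lam i • d i) :
    (∀ i, 0 ≤ ∑ j, d i j * d i j / p j) ∧
      (Q *ᵥ v ≠ 0 → ∃ i, lam i ≠ 0 ∧ 0 < ∑ j, d i j * d i j / p j) := by
  refine ⟨fun i => sum_mul_self_div_nonneg (fun j => (hp j).le) (d i), fun hQv => ?_⟩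
  have hPQ : (Matrix.diagonal p * Q).mulVecLin (∑ i, d i) ≠ 0 := by
    rw [← hdecomp, Matrix.mulVecLin_apply, ← Matrix.mulVec_mulVec]
    exact diagonal_mulVec_ne_zero (fun j => (hp j).ne') hQv
  obtain ⟨i, hlam, hd⟩ := exists_eigenvalue_ne_zero_of_map_sum_ne_zero heig hPQ
  exact ⟨i, hlam, sum_mul_self_div_pos hp hd⟩

end OrderedField

theorem statement_13 (k h : ℕ) (p : Fin k → ℝ) (hp : ∀ i, 0 < p i)
    (Q : Matrix (Fin k) (Fin k) ℝ) (hQ : Q.IsSymm)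
    (a b : Fin k) (d : Fin h → Fin k → ℝ) (lam : Fin h → ℝ) (hlam : Function.Injective lam)
    (hdecomp : (Pi.single a 1 - Pi.single b 1 : Fin k → ℝ) = ∑ i, d i)
    (heig : ∀ i, (Matrix.diagonal p * Q).mulVec (d i) = lam i • d i) :
    (∀ i, 0 ≤ ∑ j, d i j * d i j / p j) ∧
      ((fun j => Q a j) ≠ (fun j => Q b j) →
        ∃ i, lam i ≠ 0 ∧ 0 < ∑ j, d i j * d i j / p j) := by
  obtain ⟨hnonneg, hpos⟩ := statement_13_general hp hdecomp heig
  exact ⟨hnonneg, fun hrow => hpos <|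
    mulVec_single_sub_single_of_isSymm hQ a b ▸ sub_ne_zero.mpr hrow⟩
end

section
/- Let p ∈ ℝ^k have all entries positive, let P = diag(p), and let Q be a symmetric k×k real matrix. Let λ₁,...,λ_h be pairwise distinct real numbers and for a, b ∈ {1,...,k} suppose e_a = ∑_{i=1}^h w_i(a) and e_b = ∑_{i=1}^h w_i(b), where PQ w_i(a) = λ_i w_i(a) and PQ w_i(b) = λ_i w_i(b) for each i. Define ζ_i(a,b) = w_i(a) · (P⁻¹ w_i(b)). Then for every i, ζ_i(a,a) − 2ζ_i(a,b) + ζ_i(b,b) ≥ 0, and equality holds for all i simultaneously if and only if a = b. -/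
open scoped BigOperators

/-!
Write `⟨u, v⟩` for `u · (P⁻¹ v)`. The quantity `ζ_i(a,a) - 2 ζ_i(a,b) + ζ_i(b,b)` is
`⟨w_i(a) - w_i(b), w_i(a) - w_i(b)⟩`, and `⟨·, ·⟩` is positive definite. Hence it is nonnegative,
and it vanishes for all `i` exactly when the two eigendecompositions agree term by term. Since
eigenspaces for distinct eigenvalues are independent, this happens exactly when the two decomposed
vectors agree.
-/

section Eigendecomposition

variable {R M ι : Type*} [CommRing R] [IsDomain R] [AddCommGroup M] [Module R M]
  [Module.IsTorsionFree R M] [Fintype ι]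

theorem sum_eq_sum_iff_of_mem_eigenspace (f : Module.End R M) {μ : ι → R}
    (hμ : Function.Injective μ) {u v : ι → M} (hu : ∀ i, u i ∈ f.eigenspace (μ i))
    (hv : ∀ i, v i ∈ f.eigenspace (μ i)) : ∑ i, u i = ∑ i, v i ↔ u = v := by
  refine ⟨fun hsum => ?_, fun huv => huv ▸ rfl⟩
  have hindep : iSupIndep fun i => f.eigenspace (μ i) := f.eigenspaces_iSupIndep.comp hμ
  funext i
  exact (iSupIndep_iff_finsetSum_eq_imp_eq _).mp hindep Finset.univ u v
    (fun j _ => ⟨hu j, hv j⟩) hsum i (Finset.mem_univ i)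

end Eigendecomposition

section InvWeightedInner

variable {K n : Type*} [Field K] [Fintype n]

/-- The bilinear pairing `u · (P⁻¹ v)` with `P = diag(p)`, so that
`ζ_i(a,b) = invWeightedInner p (w_i(a)) (w_i(b))`. It is written as a sum of quotients, in which an
index with `p j = 0` would contribute nothing. -/
def invWeightedInner (p u v : n → K) : K :=
  ∑ j, u j * v j / p j

theorem invWeightedInner_sub_sub_self (p u v : n → K) :
    invWeightedInner p (u - v) (u - v) =
      invWeightedInner p u u - 2 * invWeightedInner p u v + invWeightedInner p v v := by
  simp only [invWeightedInner, Finset.mul_sum, ← Finset.sum_sub_distrib, ← Finset.sum_add_distrib,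
    Pi.sub_apply]
  exact Finset.sum_congr rfl fun j _ => by ring

variable [LinearOrder K] [IsStrictOrderedRing K] {p : n → K}

theorem invWeightedInner_self_nonneg (hp : ∀ j, 0 ≤ p j) (u : n → K) :
    0 ≤ invWeightedInner p u u :=
  Finset.sum_nonneg fun j _ => div_nonneg (mul_self_nonneg (u j)) (hp j)

theorem invWeightedInner_self_eq_zero (hp : ∀ j, 0 < p j) {u : n → K} :
    invWeightedInner p u u = 0 ↔ u = 0 := by
  have hterm : ∀ j ∈ Finset.univ, 0 ≤ u j * u j / p j := fun j _ =>
    div_nonneg (mul_self_nonneg (u j)) (hp j).le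
  simp [invWeightedInner, Finset.sum_eq_zero_iff_of_nonneg hterm, (hp _).ne', funext_iff]

theorem statement_14_general {ι : Type*} [Fintype ι] (hp : ∀ j, 0 < p j)
    (f : Module.End K (n → K)) {μ : ι → K} (hμ : Function.Injective μ) {x y : n → K}
    {u v : ι → n → K} (hx : x = ∑ i, u i) (hy : y = ∑ i, v i)
    (hu : ∀ i, u i ∈ f.eigenspace (μ i)) (hv : ∀ i, v i ∈ f.eigenspace (μ i)) :
    (∀ i, 0 ≤ invWeightedInner p (u i) (u i) - 2 * invWeightedInner p (u i) (v i)
        + invWeightedInner p (v i) (v i)) ∧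
    ((∀ i, invWeightedInner p (u i) (u i) - 2 * invWeightedInner p (u i) (v i)
        + invWeightedInner p (v i) (v i) = 0) ↔ x = y) := by
  simp only [← invWeightedInner_sub_sub_self]
  refine ⟨fun i => invWeightedInner_self_nonneg (fun j => (hp j).le) _, ?_⟩
  rw [hx, hy, sum_eq_sum_iff_of_mem_eigenspace f hμ hu hv]
  simp only [invWeightedInner_self_eq_zero hp, sub_eq_zero, funext_iff]

end InvWeightedInner

theorem statement_14 (k h : ℕ) (p : Fin k → ℝ) (hp : ∀ i, 0 < p i)
    (Q : Matrix (Fin k) (Fin k) ℝ) (hQ : Q.IsSymm)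
    (lam : Fin h → ℝ) (hlam : Function.Injective lam)
    (a b : Fin k) (wa wb : Fin h → Fin k → ℝ)
    (ha : (Pi.single a 1 : Fin k → ℝ) = ∑ i, wa i)
    (hb : (Pi.single b 1 : Fin k → ℝ) = ∑ i, wb i)
    (heiga : ∀ i, (Matrix.diagonal p * Q).mulVec (wa i) = lam i • wa i)
    (heigb : ∀ i, (Matrix.diagonal p * Q).mulVec (wb i) = lam i • wb i) :
    (∀ i, 0 ≤ (∑ j, wa i j * wa i j / p j) - 2 * (∑ j, wa i j * wb i j / p j)
        + ∑ j, wb i j * wb i j / p j) ∧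
    ((∀ i, (∑ j, wa i j * wa i j / p j) - 2 * (∑ j, wa i j * wb i j / p j)
        + (∑ j, wb i j * wb i j / p j) = 0) ↔ a = b) :=
  (statement_14_general hp (Matrix.toLin' (Matrix.diagonal p * Q)) hlam ha hb
    (fun i => Module.End.mem_eigenspace_iff.mpr (heiga i))
    (fun i => Module.End.mem_eigenspace_iff.mpr (heigb i))).imp_right
    (·.trans (Pi.linearIndependent_single_one (Fin k) ℝ).injective.eq_iff)
end

section
/- Let p ∈ ℝ^k have all entries positive with ∑_{i=1}^k p_i = 1, let P = diag(p), and let Q be a symmetric k×k real matrix with nonnegative entries. Suppose p = ∑_{i=1}^h w_i where PQ w_i = λ_i w_i for pairwise distinct real numbers λ₁,...,λ_h, let λ₁* := max_i |λ_i| > 0, and let λ' ∈ (0, λ₁*]. Let R ∈ ℕ, σ ∈ {1,...,k}, x > 0, and let N₀, N₁, ..., N_R ∈ ℝ^k with N₀ = e_σ satisfy: for all 0 ≤ r < R and all w ∈ ℝ^k with w · (P w) = 1, |w · N_{r+1} − w · (PQ N_r)| ≤ (x λ'/2) · (λ'²/(2λ₁*))^r. Then for all 0 ≤ r ≤ R,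 |∑_{j=1}^k (N_r)_j| ≤ (λ₁*)^r · √k · ((min_i p_i)^{−1/2} + x). -/
open scoped BigOperators
open Matrix

/-!
Rescaling coordinates by `P^(-1/2)` turns `PQ` into the symmetric matrix `S = P^(1/2) Q P^(1/2)`,
the hypothesis on `N` into the norm bound `‖n (r + 1) - S (n r)‖ ≤ ε r` for `n r = P^(-1/2) N r`,
and the coordinate sum of `N r` into `⟪f, n r⟫`, where `f = P^(-1/2) p` has norm `√(∑ p)`.
By assumption `f` lies in the span of the eigenspaces of `S` with eigenvalues at most `lamMax` in
modulus. These are mutually orthogonal, so `‖S^m f‖ ≤ lamMax^m ‖f‖`. Moving powers of `S` onto `f`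
in the inner product, the contribution of `n 0` is therefore at most `lamMax^r ‖f‖ ‖n 0‖`, and the
error made at step `s` contributes at most `lamMax^(r - 1 - s) ‖f‖ ε s`; these errors sum to at
most `lamMax^r ‖f‖ x`.
-/

section BoundedSpectralSubspace

open Module.End

variable {𝕜 E : Type*} [RCLike 𝕜] [NormedAddCommGroup E] [InnerProductSpace 𝕜 E]
  {T : E →ₗ[𝕜] E} {L : ℝ} {v : E}

/-- The span of all eigenvectors of `T` with eigenvalue of modulus at most `L`: the subspace on
which a symmetric `T` expands norms by a factor of at most `L`. -/
def boundedSpectralSubspace (T : E →ₗ[𝕜] E) (L : ℝ) : Submodule 𝕜 E :=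
  ⨆ μ : {μ : 𝕜 // ‖μ‖ ≤ L}, eigenspace T μ

theorem mem_boundedSpectralSubspace_of_apply_eq_smul {μ : 𝕜} (hμ : ‖μ‖ ≤ L) (hv : T v = μ • v) :
    v ∈ boundedSpectralSubspace T L :=
  Submodule.mem_iSup_of_mem (⟨μ, hμ⟩ : {μ : 𝕜 // ‖μ‖ ≤ L}) (mem_eigenspace_iff.2 hv)

theorem exists_finsupp_eigenvectors_of_mem_boundedSpectralSubspace
    (hv : v ∈ boundedSpectralSubspace T L) :
    ∃ g : {μ : 𝕜 // ‖μ‖ ≤ L} →₀ E,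
      (∀ μ, g μ ∈ eigenspace T μ.1) ∧ v = ∑ μ ∈ g.support, g μ := by
  obtain ⟨g, hg, hsum⟩ := (Submodule.mem_iSup_iff_exists_finsupp _ _).1 hv
  exact ⟨g, hg, hsum.symm⟩

theorem apply_mem_boundedSpectralSubspace (hv : v ∈ boundedSpectralSubspace T L) :
    T v ∈ boundedSpectralSubspace T L := by
  obtain ⟨g, hg, rfl⟩ := exists_finsupp_eigenvectors_of_mem_boundedSpectralSubspace hv
  rw [map_sum]
  refine Submodule.sum_mem _ fun μ _ => Submodule.mem_iSup_of_mem μ ?_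
  rw [mem_eigenspace_iff.1 (hg μ)]
  exact Submodule.smul_mem _ _ (hg μ)

theorem pow_apply_mem_boundedSpectralSubspace (hv : v ∈ boundedSpectralSubspace T L) (m : ℕ) :
    (T ^ m) v ∈ boundedSpectralSubspace T L := by
  induction m with
  | zero => simpa using hv
  | succ m ih =>
    rw [pow_succ', Module.End.mul_apply]
    exact apply_mem_boundedSpectralSubspace ih

theorem norm_sq_sum_eigenvectors (hT : T.IsSymmetric) {ι : Type*} {μ : ι → 𝕜}
    (hμ : Function.Injective μ) {g : ι → E} (hg : ∀ i, g i ∈ eigenspace T (μ i)) (s : Finset ι) :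
    ‖∑ i ∈ s, g i‖ ^ 2 = ∑ i ∈ s, ‖g i‖ ^ 2 :=
  (hT.orthogonalFamily_eigenspaces.comp hμ).norm_sum (fun i => ⟨g i, hg i⟩) s

theorem norm_apply_le_of_mem_boundedSpectralSubspace (hT : T.IsSymmetric) (hL : 0 ≤ L)
    (hv : v ∈ boundedSpectralSubspace T L) : ‖T v‖ ≤ L * ‖v‖ := by
  obtain ⟨g, hg, rfl⟩ := exists_finsupp_eigenvectors_of_mem_boundedSpectralSubspace hv
  have hTg (μ) : T (g μ) = μ.1 • g μ := mem_eigenspace_iff.1 (hg μ)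
  have hTg_mem (μ) : T (g μ) ∈ eigenspace T μ.1 := by
    rw [hTg]
    exact Submodule.smul_mem _ _ (hg μ)
  refine le_of_sq_le_sq ?_ (by positivity)
  calc ‖T (∑ μ ∈ g.support, g μ)‖ ^ 2
      = ∑ μ ∈ g.support, ‖T (g μ)‖ ^ 2 := by
        rw [map_sum, norm_sq_sum_eigenvectors hT Subtype.val_injective hTg_mem]
    _ ≤ ∑ μ ∈ g.support, L ^ 2 * ‖g μ‖ ^ 2 := by
        gcongr with μ
        rw [hTg, norm_smul, mul_pow]
        gcongr
        exact μ.2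
    _ = (L * ‖∑ μ ∈ g.support, g μ‖) ^ 2 := by
        rw [mul_pow, norm_sq_sum_eigenvectors hT Subtype.val_injective hg, Finset.mul_sum]

theorem norm_pow_apply_le_of_mem_boundedSpectralSubspace (hT : T.IsSymmetric) (hL : 0 ≤ L)
    (hv : v ∈ boundedSpectralSubspace T L) (m : ℕ) : ‖(T ^ m) v‖ ≤ L ^ m * ‖v‖ := by
  induction m with
  | zero => simp
  | succ m ih =>
    calc ‖(T ^ (m + 1)) v‖ = ‖T ((T ^ m) v)‖ := by rw [pow_succ', Module.End.mul_apply]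
      _ ≤ L * ‖(T ^ m) v‖ := norm_apply_le_of_mem_boundedSpectralSubspace hT hL
          (pow_apply_mem_boundedSpectralSubspace hv m)
      _ ≤ L * (L ^ m * ‖v‖) := by gcongr
      _ = L ^ (m + 1) * ‖v‖ := by ring

variable {n : ℕ → E} {δ : ℕ → ℝ} {R : ℕ}

theorem norm_inner_pow_apply_le_of_norm_sub_apply_le (hT : T.IsSymmetric) (hL : 0 ≤ L)
    (hv : v ∈ boundedSpectralSubspace T L)
    (hn : ∀ r < R, ‖n (r + 1) - T (n r)‖ ≤ L ^ (r + 1) * δ r) {r : ℕ} (hr : r ≤ R) (m : ℕ) :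
    ‖inner 𝕜 ((T ^ m) v) (n r)‖ ≤
      L ^ (m + r) * ‖v‖ * (‖n 0‖ + ∑ s ∈ Finset.range r, δ s) := by
  have hpow := norm_pow_apply_le_of_mem_boundedSpectralSubspace hT hL hv
  induction r generalizing m with
  | zero =>
    calc ‖inner 𝕜 ((T ^ m) v) (n 0)‖ ≤ ‖(T ^ m) v‖ * ‖n 0‖ := norm_inner_le_norm _ _
      _ ≤ L ^ m * ‖v‖ * ‖n 0‖ := by gcongr; exact hpow m
      _ = _ := by simp
  | succ r ih =>
    have hsplit : inner 𝕜 ((T ^ m) v) (n (r + 1)) =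
        inner 𝕜 ((T ^ m) v) (n (r + 1) - T (n r)) + inner 𝕜 ((T ^ (m + 1)) v) (n r) := by
      rw [inner_sub_right, pow_succ', Module.End.mul_apply, hT, sub_add_cancel]
    have herror : ‖inner 𝕜 ((T ^ m) v) (n (r + 1) - T (n r))‖ ≤
        L ^ m * ‖v‖ * (L ^ (r + 1) * δ r) :=
      (norm_inner_le_norm _ _).trans
        (mul_le_mul (hpow m) (hn r hr) (norm_nonneg _) (by positivity))
    calc ‖inner 𝕜 ((T ^ m) v) (n (r + 1))‖
        ≤ L ^ m * ‖v‖ * (L ^ (r + 1) * δ r) +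
          L ^ (m + 1 + r) * ‖v‖ * (‖n 0‖ + ∑ s ∈ Finset.range r, δ s) := by
          rw [hsplit]
          exact (norm_add_le _ _).trans (add_le_add herror (ih (by lia) (m + 1)))
      _ = _ := by rw [Finset.sum_range_succ]; ring

theorem norm_inner_le_of_norm_sub_apply_le (hT : T.IsSymmetric) (hL : 0 ≤ L)
    (hv : v ∈ boundedSpectralSubspace T L)
    (hn : ∀ r < R, ‖n (r + 1) - T (n r)‖ ≤ L ^ (r + 1) * δ r) {r : ℕ} (hr : r ≤ R) :
    ‖inner 𝕜 v (n r)‖ ≤ L ^ r * ‖v‖ * (‖n 0‖ + ∑ s ∈ Finset.range r, δ s) := by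
  simpa using norm_inner_pow_apply_le_of_norm_sub_apply_le hT hL hv hn hr 0

end BoundedSpectralSubspace

section Symmetrization

variable {κ : Type*} [Fintype κ] [DecidableEq κ] {p : κ → ℝ} {Q : Matrix κ κ ℝ}

/-- The map `v ↦ P^(-1/2) v` with `P = diag p`, into Euclidean space; it sends the coordinates
with `p i ≤ 0` to `0`. Its norm is dual to `u ↦ √(u ⬝ᵥ P *ᵥ u)` when `p` is positive. -/
noncomputable def invSqrtScaling (p : κ → ℝ) : (κ → ℝ) →ₗ[ℝ] EuclideanSpace ℝ κ :=
  toEuclideanLin (diagonal fun i => (√(p i))⁻¹) ∘ₗ (WithLp.linearEquiv 2 ℝ (κ → ℝ)).symm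

/-- The operator `P^(1/2) Q P^(1/2)` on Euclidean space, with `P = diag p`; it is conjugate to `PQ`
through `invSqrtScaling p`. -/
noncomputable def symmetrization (p : κ → ℝ) (Q : Matrix κ κ ℝ) :
    EuclideanSpace ℝ κ →ₗ[ℝ] EuclideanSpace ℝ κ :=
  toEuclideanLin (diagonal (fun i => √(p i)) * Q * diagonal fun i => √(p i))

theorem invSqrtScaling_apply (v : κ → ℝ) (i : κ) : invSqrtScaling p v i = v i / √(p i) := by
  simp [invSqrtScaling, mulVec_diagonal, div_eq_inv_mul]

theorem symmetrization_isSymmetric (hQ : Q.IsSymm) : (symmetrization p Q).IsSymmetric := by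
  refine isSymmetric_toEuclideanLin_iff.2 ?_
  rw [IsHermitian, conjTranspose_eq_transpose_of_trivial]
  simp only [transpose_mul, diagonal_transpose, hQ.eq, Matrix.mul_assoc]

theorem symmetrization_invSqrtScaling (hp : ∀ i, 0 < p i) (v : κ → ℝ) :
    symmetrization p Q (invSqrtScaling p v) = invSqrtScaling p ((diagonal p * Q) *ᵥ v) := by
  have hsqrt_inv : (diagonal fun i => √(p i)) *ᵥ (invSqrtScaling p v).ofLp = v := by
    ext i
    rw [mulVec_diagonal, invSqrtScaling_apply]
    exact mul_div_cancel₀ _ (Real.sqrt_pos.2 (hp i)).ne'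
  ext i
  rw [invSqrtScaling_apply, symmetrization, ofLp_toLpLin, toLin'_apply, ← mulVec_mulVec,
    hsqrt_inv, ← mulVec_mulVec, ← mulVec_mulVec, mulVec_diagonal, mulVec_diagonal,
    mul_div_right_comm, Real.div_sqrt]

theorem inner_invSqrtScaling_self_left (hp : ∀ i, 0 < p i) (v : κ → ℝ) :
    inner ℝ (invSqrtScaling p p) (invSqrtScaling p v) = ∑ i, v i := by
  rw [PiLp.inner_apply]
  refine Finset.sum_congr rfl fun i _ => ?_
  have hpi := (Real.sqrt_pos.2 (hp i)).ne'
  rw [invSqrtScaling_apply, invSqrtScaling_apply, Real.div_sqrt]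
  simp [hpi]

theorem norm_invSqrtScaling_sq (hp : ∀ i, 0 ≤ p i) (v : κ → ℝ) :
    ‖invSqrtScaling p v‖ ^ 2 = ∑ i, v i ^ 2 / p i := by
  rw [EuclideanSpace.real_norm_sq_eq]
  exact Finset.sum_congr rfl fun i _ => by
    rw [invSqrtScaling_apply, div_pow, Real.sq_sqrt (hp i)]

theorem norm_invSqrtScaling (hp : ∀ i, 0 ≤ p i) (v : κ → ℝ) :
    ‖invSqrtScaling p v‖ = √(∑ i, v i ^ 2 / p i) := by
  rw [← norm_invSqrtScaling_sq hp, Real.sqrt_sq (norm_nonneg _)]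

theorem norm_invSqrtScaling_self (hp : ∀ i, 0 < p i) :
    ‖invSqrtScaling p p‖ = √(∑ i, p i) := by
  rw [norm_eq_sqrt_real_inner, inner_invSqrtScaling_self_left hp]

theorem norm_invSqrtScaling_le_of_forall_abs_dotProduct_le (hp : ∀ i, 0 < p i) {v : κ → ℝ} {ε : ℝ}
    (hε : 0 ≤ ε) (h : ∀ u : κ → ℝ, u ⬝ᵥ diagonal p *ᵥ u = 1 → |u ⬝ᵥ v| ≤ ε) :
    ‖invSqrtScaling p v‖ ≤ ε := by
  have hsq := norm_invSqrtScaling_sq (fun i => (hp i).le) v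
  rcases (norm_nonneg (invSqrtScaling p v)).eq_or_lt with hzero | hpos
  · rwa [← hzero]
  set c := ‖invSqrtScaling p v‖
  -- The maximizer `P⁻¹ v / c` of `u ↦ u ⬝ᵥ v` on the unit sphere.
  set u : κ → ℝ := fun i => v i / p i / c
  have hu_norm : u ⬝ᵥ diagonal p *ᵥ u = 1 := by
    calc u ⬝ᵥ diagonal p *ᵥ u = ∑ i, v i ^ 2 / p i / c ^ 2 :=
          Finset.sum_congr rfl fun i _ => by
            have := (hp i).ne'
            rw [mulVec_diagonal]
            simp only [u]
            field_simp
      _ = 1 := by rw [← Finset.sum_div, ← hsq, div_self (by positivity)]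
  have hu_apply : u ⬝ᵥ v = c := by
    calc u ⬝ᵥ v = ∑ i, v i ^ 2 / p i / c := Finset.sum_congr rfl fun i _ => by
          simp only [u]
          ring
      _ = c := by rw [← Finset.sum_div, ← hsq, sq, mul_self_div_self]
  exact (le_abs_self c).trans (hu_apply ▸ h u hu_norm)

theorem invSqrtScaling_sum_mem_boundedSpectralSubspace {ι : Type*} [Fintype ι]
    (hp : ∀ i, 0 < p i) {w : ι → κ → ℝ} {lam : ι → ℝ} {L : ℝ}
    (hw : ∀ i, (diagonal p * Q) *ᵥ w i = lam i • w i) (hL : ∀ i, |lam i| ≤ L) :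
    invSqrtScaling p (∑ i, w i) ∈ boundedSpectralSubspace (symmetrization p Q) L := by
  rw [map_sum]
  refine Submodule.sum_mem _ fun i _ => mem_boundedSpectralSubspace_of_apply_eq_smul (hL i) ?_
  rw [symmetrization_invSqrtScaling hp, hw, map_smul]

theorem sqrt_sum_single_sq_div_le_iInf_rpow (hp : ∀ i, 0 < p i) (σ : κ) :
    √(∑ j, (Pi.single σ 1 : κ → ℝ) j ^ 2 / p j) ≤ (⨅ i, p i) ^ (-(1 / 2) : ℝ) := by
  have : Nonempty κ := ⟨σ⟩
  have hmin_pos : 0 < ⨅ i, p i := by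
    obtain ⟨i, hi⟩ := exists_eq_ciInf_of_finite (f := p)
    exact hi ▸ hp i
  have hmin_le : ⨅ i, p i ≤ p σ := ciInf_le (Set.finite_range p).bddBelow σ
  calc √(∑ j, (Pi.single σ 1 : κ → ℝ) j ^ 2 / p j) = p σ ^ (-(1 / 2) : ℝ) := by
        simp [Pi.single_apply, ite_div, Real.rpow_neg (hp σ).le, Real.inv_rpow (hp σ).le,
          Real.sqrt_eq_rpow]
    _ ≤ (⨅ i, p i) ^ (-(1 / 2) : ℝ) :=
        Real.rpow_le_rpow_of_nonpos hmin_pos hmin_le (by norm_num)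

end Symmetrization

theorem good_error_le_pow_mul_half_pow {x lam L : ℝ} (hx : 0 ≤ x) (hlam : 0 ≤ lam) (hL : 0 < L)
    (hle : lam ≤ L) (r : ℕ) :
    x * lam / 2 * (lam ^ 2 / (2 * L)) ^ r ≤ L ^ (r + 1) * (x / 2 * (1 / 2) ^ r) := by
  calc x * lam / 2 * (lam ^ 2 / (2 * L)) ^ r ≤ x * L / 2 * (L ^ 2 / (2 * L)) ^ r := by gcongr
    _ = x * L / 2 * (L * (1 / 2)) ^ r := by
        congr 2
        field_simp
    _ = L ^ (r + 1) * (x / 2 * (1 / 2) ^ r) := by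
        rw [mul_pow]
        ring

theorem sum_range_half_mul_half_pow_le {x : ℝ} (hx : 0 ≤ x) (r : ℕ) :
    ∑ s ∈ Finset.range r, x / 2 * (1 / 2) ^ s ≤ x := by
  calc ∑ s ∈ Finset.range r, x / 2 * (1 / 2) ^ s
      = x / 2 * ∑ s ∈ Finset.range r, (1 / 2) ^ s := (Finset.mul_sum ..).symm
    _ ≤ x / 2 * 2 := by gcongr; exact sum_geometric_two_le r
    _ = x := div_mul_cancel₀ x two_ne_zero

theorem statement_15_general {κ ι : Type*} [Fintype κ] [DecidableEq κ] [Fintype ι]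
    {p : κ → ℝ} (hp : ∀ i, 0 < p i) {Q : Matrix κ κ ℝ} (hQ : Q.IsSymm)
    {w : ι → κ → ℝ} {lam : ι → ℝ} (hdecomp : p = ∑ i, w i)
    (heig : ∀ i, (diagonal p * Q) *ᵥ w i = lam i • w i)
    {lamMax : ℝ} (hmaxle : ∀ i, |lam i| ≤ lamMax)
    {lam' : ℝ} (hlam' : 0 < lam') (hle : lam' ≤ lamMax)
    {R : ℕ} {x : ℝ} (hx : 0 ≤ x) {N : ℕ → κ → ℝ}
    (hgood : ∀ r < R, ∀ v : κ → ℝ, v ⬝ᵥ diagonal p *ᵥ v = 1 →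
      |v ⬝ᵥ N (r + 1) - v ⬝ᵥ (diagonal p * Q) *ᵥ N r|
        ≤ x * lam' / 2 * (lam' ^ 2 / (2 * lamMax)) ^ r)
    {r : ℕ} (hr : r ≤ R) :
    |∑ j, N r j| ≤ lamMax ^ r * √(∑ j, p j) * (√(∑ j, N 0 j ^ 2 / p j) + x) := by
  have hmaxpos : 0 < lamMax := hlam'.trans_le hle
  have hmem : invSqrtScaling p p ∈ boundedSpectralSubspace (symmetrization p Q) lamMax := by
    have := invSqrtScaling_sum_mem_boundedSpectralSubspace hp heig hmaxle
    rwa [← hdecomp] at this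
  have herror : ∀ r < R,
      ‖invSqrtScaling p (N (r + 1)) - symmetrization p Q (invSqrtScaling p (N r))‖
        ≤ lamMax ^ (r + 1) * (x / 2 * (1 / 2) ^ r) := fun r hr => by
    rw [symmetrization_invSqrtScaling hp, ← map_sub]
    refine le_trans ?_ (good_error_le_pow_mul_half_pow hx hlam'.le hmaxpos hle r)
    refine norm_invSqrtScaling_le_of_forall_abs_dotProduct_le hp (by positivity) fun v hv => ?_
    rw [dotProduct_sub]
    exact hgood r hr v hv
  have hbound := norm_inner_le_of_norm_sub_apply_le (n := fun r => invSqrtScaling p (N r))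
    (symmetrization_isSymmetric hQ) hmaxpos.le hmem herror hr
  rw [inner_invSqrtScaling_self_left hp, norm_invSqrtScaling_self hp,
    norm_invSqrtScaling fun i => (hp i).le] at hbound
  refine hbound.trans ?_
  gcongr
  exact sum_range_half_mul_half_pow_le hx r

theorem statement_15 (k h : ℕ) (hk : 0 < k) (hh : 0 < h)
    (p : Fin k → ℝ) (hp : ∀ i, 0 < p i) (hpsum : ∑ i, p i = 1)
    (Q : Matrix (Fin k) (Fin k) ℝ) (hQ : Q.IsSymm) (hQ0 : ∀ i j, 0 ≤ Q i j)
    (w : Fin h → Fin k → ℝ) (lam : Fin h → ℝ) (hlam : Function.Injective lam)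
    (hdecomp : p = ∑ i, w i)
    (heig : ∀ i, (Matrix.diagonal p * Q).mulVec (w i) = lam i • w i)
    (lamMax : ℝ) (hmaxle : ∀ i, |lam i| ≤ lamMax) (hmaxmem : ∃ i, lamMax = |lam i|)
    (hmaxpos : 0 < lamMax)
    (lam' : ℝ) (hlam' : 0 < lam') (hle : lam' ≤ lamMax)
    (R : ℕ) (σ : Fin k) (x : ℝ) (hx : 0 < x)
    (N : ℕ → Fin k → ℝ) (hN0 : N 0 = Pi.single σ 1)
    (hgood : ∀ r < R, ∀ v : Fin k → ℝ, v ⬝ᵥ (Matrix.diagonal p).mulVec v = 1 →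
      |v ⬝ᵥ N (r + 1) - v ⬝ᵥ (Matrix.diagonal p * Q).mulVec (N r)|
        ≤ x * lam' / 2 * (lam' ^ 2 / (2 * lamMax)) ^ r) :
    ∀ r ≤ R, |∑ j, N r j|
      ≤ lamMax ^ r * Real.sqrt k * ((⨅ i, p i) ^ (-(1 / 2) : ℝ) + x) := by
  intro r hr
  have hsqrt : 1 ≤ √(k : ℝ) := Real.one_le_sqrt.2 (by exact_mod_cast hk)
  refine (statement_15_general hp hQ hdecomp heig hmaxle hlam' hle hx.le hgood hr).trans ?_
  rw [hpsum, Real.sqrt_one, hN0]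
  gcongr
  exact sqrt_sum_single_sq_div_le_iInf_rpow hp σ
end

section
/- Let p ∈ ℝ^k have all entries positive, let P = diag(p), and let Q be a symmetric k×k real matrix. Let λ₁* > 0 and λ' ∈ (0, λ₁*]. Let R ∈ ℕ, σ ∈ {1,...,k}, x > 0, and let N₀, N₁, ..., N_R ∈ ℝ^k with N₀ = e_σ satisfy: for all 0 ≤ r < R and all w ∈ ℝ^k with w · (P w) = 1, |w · N_{r+1} − w · (PQ N_r)| ≤ (x λ'/2) · (λ'²/(2λ₁*))^r. Then for every w ∈ ℝ^k with PQ w = λ w for some real λ with |λ| ≤ λ₁*, and for all 0 ≤ r ≤ R, |(P⁻¹ w) · N_r| ≤ (λ₁*)^r · (|w_σ|/p_σ + x·√(w · (P⁻¹ w))). -/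
open scoped BigOperators
open Matrix

/-!
For an eigenvector `w` of `P * Q`, the vector `P⁻¹ w` is a left eigenvector of `P * Q` with the
same eigenvalue, because `Q` is symmetric. The scalars `a r = P⁻¹ w ⬝ᵥ N r` therefore satisfy
`a (r + 1) ≈ lam * a r`. By homogeneity the error is at most `√(w ⬝ᵥ P⁻¹ w)` times the bound
assumed for unit vectors, hence at most `(lamMax / 2) ^ (r + 1) * x * √(w ⬝ᵥ P⁻¹ w)`. Relative to
the growth `lamMax ^ (r + 1)` these errors are halved at each step, so they add up to at most
`x * √(w ⬝ᵥ P⁻¹ w)`.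
-/

section Recursion

variable {𝕜 E : Type*} [SeminormedRing 𝕜] [SeminormedAddCommGroup E] [Module 𝕜 E]
  [IsBoundedSMul 𝕜 E] {a : ℕ → E} {μ : 𝕜} {L q C : ℝ} {R r : ℕ}

theorem norm_le_pow_mul_add_one_sub_pow_of_norm_sub_smul_le (hμ : ‖μ‖ ≤ L)
    (ha : ∀ r < R, ‖a (r + 1) - μ • a r‖ ≤ C * (1 - q) * L * (L * q) ^ r) (hr : r ≤ R) :
    ‖a r‖ ≤ L ^ r * (‖a 0‖ + C * (1 - q ^ r)) := by
  induction r with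
  | zero => simp
  | succ r ih =>
    calc ‖a (r + 1)‖ ≤ ‖μ • a r‖ + ‖a (r + 1) - μ • a r‖ := norm_le_insert' _ _
      _ ≤ L * ‖a r‖ + C * (1 - q) * L * (L * q) ^ r :=
          add_le_add ((norm_smul_le μ (a r)).trans (by gcongr)) (ha r hr)
      _ ≤ L * (L ^ r * (‖a 0‖ + C * (1 - q ^ r))) + C * (1 - q) * L * (L * q) ^ r := by
          have hL : 0 ≤ L := (norm_nonneg μ).trans hμ
          gcongr
          exact ih (Nat.le_of_succ_le hr)
      _ = L ^ (r + 1) * (‖a 0‖ + C * (1 - q ^ (r + 1))) := by ring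

theorem norm_le_pow_mul_add_of_norm_sub_smul_le (hμ : ‖μ‖ ≤ L) (hq : 0 ≤ q) (hC : 0 ≤ C)
    (ha : ∀ r < R, ‖a (r + 1) - μ • a r‖ ≤ C * (1 - q) * L * (L * q) ^ r) (hr : r ≤ R) :
    ‖a r‖ ≤ L ^ r * (‖a 0‖ + C) := by
  have hL : 0 ≤ L := (norm_nonneg μ).trans hμ
  refine (norm_le_pow_mul_add_one_sub_pow_of_norm_sub_smul_le hμ ha hr).trans ?_
  gcongr
  exact mul_le_of_le_one_right hC (sub_le_self 1 (pow_nonneg hq r))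

end Recursion

section Matrices

variable {n : Type*} [Fintype n]

theorem abs_dotProduct_le_mul_sqrt_of_posDef {A : Matrix n n ℝ} (hA : A.PosDef) {y : n → ℝ} {c : ℝ}
    (hc : ∀ v, v ⬝ᵥ A *ᵥ v = 1 → |v ⬝ᵥ y| ≤ c) (v : n → ℝ) :
    |v ⬝ᵥ y| ≤ c * √(v ⬝ᵥ A *ᵥ v) := by
  rcases eq_or_ne v 0 with rfl | hv
  · simp
  have hpos : 0 < v ⬝ᵥ A *ᵥ v := by simpa using hA.dotProduct_mulVec_pos hv
  set s := √(v ⬝ᵥ A *ᵥ v) with hs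
  have hs_pos : 0 < s := Real.sqrt_pos.2 hpos
  have hunit : (s⁻¹ • v) ⬝ᵥ A *ᵥ (s⁻¹ • v) = 1 := by
    rw [mulVec_smul, smul_dotProduct, dotProduct_smul, ← Real.mul_self_sqrt hpos.le, ← hs,
      smul_eq_mul, smul_eq_mul, inv_mul_cancel_left₀ hs_pos.ne', inv_mul_cancel₀ hs_pos.ne']
  have hbound := hc _ hunit
  rwa [smul_dotProduct, smul_eq_mul, abs_mul, abs_of_pos (inv_pos.2 hs_pos),
    inv_mul_le_iff₀ hs_pos, mul_comm] at hbound

variable [DecidableEq n] {K : Type*} [Field K] {p : n → K}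

theorem div_vecMul_diagonal (hp : ∀ i, p i ≠ 0) (w : n → K) : (w / p) ᵥ* diagonal p = w := by
  ext i
  rw [vecMul_diagonal, Pi.div_apply, div_mul_cancel₀ _ (hp i)]

theorem div_dotProduct_diagonal_mulVec_div (hp : ∀ i, p i ≠ 0) (w : n → K) :
    (w / p) ⬝ᵥ diagonal p *ᵥ (w / p) = ∑ i, w i * w i / p i := by
  rw [dotProduct_mulVec, div_vecMul_diagonal hp]
  simp only [dotProduct, Pi.div_apply, mul_div_assoc]

theorem div_vecMul_diagonal_mul_eq_smul_of_isSymm (hp : ∀ i, p i ≠ 0) {Q : Matrix n n K}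
    (hQ : Q.IsSymm) {w : n → K} {lam : K} (hw : (diagonal p * Q) *ᵥ w = lam • w) :
    (w / p) ᵥ* (diagonal p * Q) = lam • (w / p) := by
  have hQw : Q *ᵥ w = lam • (w / p) := by
    ext i
    have hwi := congrFun hw i
    rw [← mulVec_mulVec, mulVec_diagonal, Pi.smul_apply, smul_eq_mul] at hwi
    rw [Pi.smul_apply, Pi.div_apply, smul_eq_mul, ← mul_div_assoc, ← hwi,
      mul_div_cancel_left₀ _ (hp i)]
  rw [← vecMul_vecMul, div_vecMul_diagonal hp, ← mulVec_transpose, hQ.eq, hQw]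

theorem abs_div_dotProduct_sub_mul_le {p : n → ℝ} (hp : ∀ i, 0 < p i) {Q : Matrix n n ℝ}
    (hQ : Q.IsSymm) {w : n → ℝ} {lam : ℝ} (hw : (diagonal p * Q) *ᵥ w = lam • w)
    {y z : n → ℝ} {c : ℝ}
    (hc : ∀ v, v ⬝ᵥ diagonal p *ᵥ v = 1 → |v ⬝ᵥ y - v ⬝ᵥ (diagonal p * Q) *ᵥ z| ≤ c) :
    |(w / p) ⬝ᵥ y - lam * ((w / p) ⬝ᵥ z)| ≤ c * √(∑ i, w i * w i / p i) := by
  have hp_ne : ∀ i, p i ≠ 0 := fun i => (hp i).ne'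
  have hscaled := abs_dotProduct_le_mul_sqrt_of_posDef (PosDef.diagonal hp)
    (y := y - (diagonal p * Q) *ᵥ z) (by simpa only [dotProduct_sub] using hc) (w / p)
  rwa [div_dotProduct_diagonal_mulVec_div hp_ne, dotProduct_sub, dotProduct_mulVec _ _ z,
    div_vecMul_diagonal_mul_eq_smul_of_isSymm hp_ne hQ hw, smul_dotProduct, smul_eq_mul] at hscaled

end Matrices

theorem mul_half_mul_sq_div_pow_le {x l L : ℝ} (hx : 0 ≤ x) (hl : 0 < l) (hle : l ≤ L) (r : ℕ) :
    x * l / 2 * (l ^ 2 / (2 * L)) ^ r ≤ x * (1 - 1 / 2) * L * (L * (1 / 2)) ^ r := by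
  have hL : 0 < L := hl.trans_le hle
  have hratio : l ^ 2 / (2 * L) ≤ L * (1 / 2) := by
    rw [div_le_iff₀ (by positivity)]
    calc l ^ 2 ≤ L ^ 2 := by gcongr
      _ = L * (1 / 2) * (2 * L) := by ring
  calc x * l / 2 * (l ^ 2 / (2 * L)) ^ r ≤ x * L / 2 * (L * (1 / 2)) ^ r := by gcongr
    _ = x * (1 - 1 / 2) * L * (L * (1 / 2)) ^ r := by ring

theorem statement_16 (k : ℕ) (p : Fin k → ℝ) (hp : ∀ i, 0 < p i)
    (Q : Matrix (Fin k) (Fin k) ℝ) (hQ : Q.IsSymm)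
    (lamMax : ℝ) (hmaxpos : 0 < lamMax)
    (lam' : ℝ) (hlam' : 0 < lam') (hle : lam' ≤ lamMax)
    (R : ℕ) (σ : Fin k) (x : ℝ) (hx : 0 < x)
    (N : ℕ → Fin k → ℝ) (hN0 : N 0 = Pi.single σ 1)
    (hgood : ∀ r < R, ∀ v : Fin k → ℝ, v ⬝ᵥ (Matrix.diagonal p).mulVec v = 1 →
      |v ⬝ᵥ N (r + 1) - v ⬝ᵥ (Matrix.diagonal p * Q).mulVec (N r)|
        ≤ x * lam' / 2 * (lam' ^ 2 / (2 * lamMax)) ^ r) :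
    ∀ (w : Fin k → ℝ) (lam : ℝ),
      (Matrix.diagonal p * Q).mulVec w = lam • w → |lam| ≤ lamMax →
      ∀ r ≤ R, |(fun i => w i / p i) ⬝ᵥ N r|
        ≤ lamMax ^ r * (|w σ| / p σ + x * Real.sqrt (∑ i, w i * w i / p i)) := by
  intro w lam hw hlam r hr
  set S := √(∑ i, w i * w i / p i)
  have hstart : |(w / p) ⬝ᵥ N 0| = |w σ| / p σ := by
    rw [hN0, dotProduct_single_one, Pi.div_apply, abs_div, abs_of_pos (hp σ)]
  have hstep : ∀ r < R, |(w / p) ⬝ᵥ N (r + 1) - lam * ((w / p) ⬝ᵥ N r)|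
      ≤ x * S * (1 - 1 / 2) * lamMax * (lamMax * (1 / 2)) ^ r := fun r hr =>
    calc |(w / p) ⬝ᵥ N (r + 1) - lam * ((w / p) ⬝ᵥ N r)|
        ≤ x * lam' / 2 * (lam' ^ 2 / (2 * lamMax)) ^ r * S :=
          abs_div_dotProduct_sub_mul_le hp hQ hw (hgood r hr)
      _ ≤ x * (1 - 1 / 2) * lamMax * (lamMax * (1 / 2)) ^ r * S := by
          gcongr ?_ * S
          exact mul_half_mul_sq_div_pow_le hx.le hlam' hle r
      _ = x * S * (1 - 1 / 2) * lamMax * (lamMax * (1 / 2)) ^ r := by ring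
  rw [← hstart]
  exact norm_le_pow_mul_add_of_norm_sub_smul_le (a := fun r => (w / p) ⬝ᵥ N r) (μ := lam) hlam
    one_half_pos.le (by positivity) hstep hr
end

section
/- Let p ∈ ℝ^k have all entries positive with ∑_{i=1}^k p_i = 1, let P = diag(p), and let Q be a symmetric k×k real matrix with nonnegative entries such that every entry of the matrix power Q^k is strictly positive. Then there exists λ > 0 such that: (i) there is a unique vector w ∈ ℝ^k with all entries strictly positive satisfying PQw = λw and w · (P⁻¹ w) = 1; and (ii) every real eigenvalue μ of PQ satisfies |μ| ≤ λ. -/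
open scoped BigOperators
open Matrix

/-!
This is the Perron–Frobenius theorem for the irreducible matrix `A = PQ`. Maximise `r` over the
compact set of pairs `(r, x)` with `0 ≤ r`, `x` in the simplex and `r x ≤ A x`. Some sum `B` of
powers of `A` has only positive entries. If `A x - r x` were nonzero at a maximiser, then `y = B x`
would satisfy `r y < A y` in every coordinate, so `r` could be increased; hence `A x = r x`.

A nonnegative eigenvector `v ≠ 0` is positive, because `A ^ m v = r ^ m v`. Subtracting from an
eigenvector the largest multiple of a positive one `w` that leaves it nonnegative produces a zero
coordinate, hence the zero vector: eigenvectors for `r` are multiples of `w`. Finally, if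
`A v = μ v`, then comparing `|μ| |v| ≤ A |v|` with `A w = r w` at a coordinate where `|v i| / w i`
is largest gives `|μ| ≤ r`.
-/

lemma exists_pos_apply_of_nonneg_of_ne_zero {m R : Type*} [Zero R] [PartialOrder R] {x : m → R}
    (hx : 0 ≤ x) (hx0 : x ≠ 0) : ∃ i, 0 < x i :=
  (Pi.lt_def.1 (hx.lt_of_ne' hx0)).2

section NonnegativeMatrix

variable {m n R : Type*} [Fintype n] [Ring R] [LinearOrder R] [IsStrictOrderedRing R]

lemma mulVec_nonneg {A : Matrix m n R} (hA : ∀ i j, 0 ≤ A i j) {x : n → R} (hx : 0 ≤ x) :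
    0 ≤ A *ᵥ x :=
  fun i => dotProduct_nonneg_of_nonneg (hA i) hx

lemma mulVec_le_mulVec {A : Matrix m n R} (hA : ∀ i j, 0 ≤ A i j) {x y : n → R} (hxy : x ≤ y) :
    A *ᵥ x ≤ A *ᵥ y :=
  fun i => dotProduct_le_dotProduct_of_nonneg_left hxy (hA i)

lemma mulVec_apply_pos {A : Matrix m n R} {i : m} {j : n} (hA : ∀ j, 0 ≤ A i j) (hij : 0 < A i j)
    {x : n → R} (hx : 0 ≤ x) (hxj : 0 < x j) : 0 < (A *ᵥ x) i :=
  Finset.sum_pos' (fun l _ => mul_nonneg (hA l) (hx l))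
    ⟨j, Finset.mem_univ j, mul_pos hij hxj⟩

lemma abs_mulVec_le {A : Matrix m n R} (hA : ∀ i j, 0 ≤ A i j) (v : n → R) :
    |A *ᵥ v| ≤ A *ᵥ |v| := by
  refine fun i => (Finset.abs_sum_le_sum_abs _ _).trans_eq (Finset.sum_congr rfl fun j _ => ?_)
  rw [abs_mul, abs_of_nonneg (hA i j), Pi.abs_apply]

end NonnegativeMatrix

lemma abs_eigenvalue_le {n R : Type*} [Fintype n] [Field R] [LinearOrder R]
    [IsStrictOrderedRing R] {A : Matrix n n R} (hA : ∀ i j, 0 ≤ A i j) {w : n → R}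
    (hw : ∀ i, 0 < w i) {r : R} (hAw : A *ᵥ w ≤ r • w) {μ : R} {v : n → R} (hv : v ≠ 0)
    (hAv : A *ᵥ v = μ • v) : |μ| ≤ r := by
  obtain ⟨j, hj⟩ := Function.ne_iff.1 hv
  have : Nonempty n := ⟨j⟩
  obtain ⟨i, hi⟩ := Finite.exists_max fun i => |v i| / w i
  set t := |v i| / w i
  have hvw : |v| ≤ t • w := fun l => (div_le_iff₀ (hw l)).1 (hi l)
  have hvi : |v i| = t * w i := (div_mul_cancel₀ _ (hw i).ne').symm
  have ht_pos : 0 < t := (div_pos (abs_pos.2 hj) (hw j)).trans_le (hi j)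
  refine le_of_mul_le_mul_right ?_ (mul_pos ht_pos (hw i))
  calc |μ| * (t * w i) = |(A *ᵥ v) i| := by
        rw [hAv, Pi.smul_apply, smul_eq_mul, abs_mul, hvi]
    _ ≤ (A *ᵥ |v|) i := abs_mulVec_le hA v i
    _ ≤ (A *ᵥ (t • w)) i := mulVec_le_mulVec hA hvw i
    _ = t * (A *ᵥ w) i := by rw [mulVec_smul, Pi.smul_apply, smul_eq_mul]
    _ ≤ t * (r * w i) := mul_le_mul_of_nonneg_left (hAw i) ht_pos.le
    _ = r * (t * w i) := mul_left_comm t r (w i)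

lemma pow_mulVec_of_mulVec_eq_smul {n R : Type*} [Fintype n] [DecidableEq n] [CommSemiring R]
    {A : Matrix n n R} {r : R} {v : n → R} (hv : A *ᵥ v = r • v) (k : ℕ) :
    (A ^ k) *ᵥ v = r ^ k • v := by
  induction k with
  | zero => simp
  | succ k ih => rw [pow_succ, ← mulVec_mulVec, hv, mulVec_smul, ih, smul_smul, pow_succ']

lemma isIrreducible_diagonal_mul {n R : Type*} [Fintype n] [DecidableEq n] [Ring R]
    [LinearOrder R] [IsStrictOrderedRing R] {p : n → R} (hp : ∀ i, 0 < p i) {Q : Matrix n n R}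
    (hQ : Q.IsIrreducible) : (diagonal p * Q).IsIrreducible := by
  have same_graph : (diagonal p * Q).toQuiver = Q.toQuiver := by
    simp only [toQuiver, diagonal_mul, mul_pos_iff_of_pos_left (hp _)]
  refine ⟨fun i j => ?_, same_graph ▸ hQ.connected⟩
  rw [diagonal_mul]
  exact mul_nonneg (hp i).le (hQ.nonneg i j)

section Irreducible

variable {n R : Type*} [Fintype n] [Field R] [LinearOrder R] [IsStrictOrderedRing R]
  {A : Matrix n n R}

lemma exists_pos_commute_of_isIrreducible (hA : A.IsIrreducible) :
    ∃ B : Matrix n n R, (∀ i j, 0 < B i j) ∧ Commute A B := by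
  classical
  choose k _ hk using (isIrreducible_iff_exists_pow_pos hA.nonneg).1 hA
  refine ⟨∑ c : n × n, A ^ k c.1 c.2, fun i j => ?_,
    Commute.sum_right _ _ _ fun c _ => Commute.self_pow A _⟩
  rw [Matrix.sum_apply]
  exact Finset.sum_pos' (fun c _ => pow_apply_nonneg hA.nonneg _ i j)
    ⟨(i, j), Finset.mem_univ _, hk i j⟩

lemma exists_pow_mul_apply_pos (hA : A.IsIrreducible) {r : R} {x : n → R} (hx : 0 ≤ x)
    (hx0 : x ≠ 0) (hAx : A *ᵥ x = r • x) (i : n) : ∃ k ≠ 0, 0 < r ^ k * x i := by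
  classical
  obtain ⟨j, hj⟩ := exists_pos_apply_of_nonneg_of_ne_zero hx hx0
  obtain ⟨k, hk0, hk⟩ := (isIrreducible_iff_exists_pow_pos hA.nonneg).1 hA i j
  refine ⟨k, hk0.ne', ?_⟩
  calc 0 < ((A ^ k) *ᵥ x) i := mulVec_apply_pos (pow_apply_nonneg hA.nonneg k i) hk hx hj
    _ = r ^ k * x i := congrFun (pow_mulVec_of_mulVec_eq_smul hAx k) i

lemma pos_of_nonneg_eigenvector (hA : A.IsIrreducible) {r : R} {x : n → R} (hx : 0 ≤ x)
    (hx0 : x ≠ 0) (hAx : A *ᵥ x = r • x) (i : n) : 0 < x i := by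
  obtain ⟨k, -, hpos⟩ := exists_pow_mul_apply_pos hA hx hx0 hAx i
  exact (hx i).lt_of_ne' (right_ne_zero_of_mul hpos.ne')

lemma eigenvalue_pos_of_nonneg_eigenvector (hA : A.IsIrreducible) {r : R} {x : n → R}
    (hx : 0 ≤ x) (hx0 : x ≠ 0) (hAx : A *ᵥ x = r • x) : 0 < r := by
  obtain ⟨i, hi⟩ := exists_pos_apply_of_nonneg_of_ne_zero hx hx0
  have hr : 0 ≤ r := by
    refine nonneg_of_mul_nonneg_left ?_ hi
    calc 0 ≤ (A *ᵥ x) i := mulVec_nonneg hA.nonneg hx i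
      _ = r * x i := congrFun hAx i
  obtain ⟨k, hk, hpos⟩ := exists_pow_mul_apply_pos hA hx hx0 hAx i
  exact hr.lt_of_ne' ((pow_ne_zero_iff hk).1 (left_ne_zero_of_mul hpos.ne'))

lemma exists_eq_smul_of_pos_eigenvector [Nonempty n] (hA : A.IsIrreducible) {r : R} {w v : n → R}
    (hw : ∀ i, 0 < w i) (hAw : A *ᵥ w = r • w) (hAv : A *ᵥ v = r • v) : ∃ t : R, v = t • w := by
  obtain ⟨i, hi⟩ := Finite.exists_min fun i => v i / w i
  set t := v i / w i
  have h_nonneg : 0 ≤ v - t • w := sub_nonneg.2 fun j => (le_div_iff₀ (hw j)).1 (hi j)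
  have h_eigen : A *ᵥ (v - t • w) = r • (v - t • w) := by
    rw [mulVec_sub, mulVec_smul, hAv, hAw, smul_sub, smul_comm]
  have h_zero : (v - t • w) i = 0 := sub_eq_zero.2 (div_mul_cancel₀ _ (hw i).ne').symm
  refine ⟨t, sub_eq_zero.1 ?_⟩
  by_contra h_ne
  exact (pos_of_nonneg_eigenvector hA h_nonneg h_ne h_eigen i).ne' h_zero

end Irreducible

/-- The admissible set in the Collatz–Wielandt description of the Perron root of `A`: pairs `(r, x)`
with `0 ≤ r`, `x` in the standard simplex, and `r x ≤ A x` coordinatewise. The normalisation of `x`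
makes this set compact, and the Perron root is the largest first component. -/
def collatzWielandtSet {n : Type*} [Fintype n] (A : Matrix n n ℝ) : Set (ℝ × (n → ℝ)) :=
  {c | 0 ≤ c.1 ∧ c.2 ∈ stdSimplex ℝ n ∧ c.1 • c.2 ≤ A *ᵥ c.2}

namespace collatzWielandtSet

variable {n : Type*} [Fintype n] {A : Matrix n n ℝ}

lemma fst_le_sum (hA : ∀ i j, 0 ≤ A i j) {c : ℝ × (n → ℝ)} (hc : c ∈ collatzWielandtSet A) :
    c.1 ≤ ∑ i, ∑ j, A i j := by
  obtain ⟨-, hx, hle⟩ := hc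
  calc c.1 = ∑ i, c.1 * c.2 i := by rw [← Finset.mul_sum, hx.2, mul_one]
    _ ≤ ∑ i, (A *ᵥ c.2) i := Finset.sum_le_sum fun i _ => hle i
    _ ≤ ∑ i, ∑ j, A i j := Finset.sum_le_sum fun i _ => Finset.sum_le_sum fun j _ =>
        mul_le_of_le_one_right (hA i j) (mem_Icc_of_mem_stdSimplex hx j).2

lemma isCompact (hA : ∀ i j, 0 ≤ A i j) : IsCompact (collatzWielandtSet A) := by
  have h_closed : IsClosed (collatzWielandtSet A) :=
    (isClosed_le continuous_const continuous_fst).inter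
      (((isClosed_stdSimplex ℝ n).preimage continuous_snd).inter
        (isClosed_le (continuous_fst.smul continuous_snd)
          (continuous_const.matrix_mulVec continuous_snd)))
  exact (isCompact_Icc.prod (isCompact_stdSimplex ℝ n)).of_isClosed_subset h_closed
    fun c hc => ⟨⟨hc.1, fst_le_sum hA hc⟩, hc.2.1⟩

lemma nonempty [Nonempty n] (hA : ∀ i j, 0 ≤ A i j) : (collatzWielandtSet A).Nonempty := by
  classical
  let i : n := Classical.arbitrary n
  have hx : Pi.single i 1 ∈ stdSimplex ℝ n := single_mem_stdSimplex ℝ i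
  refine ⟨(0, Pi.single i 1), le_rfl, hx, ?_⟩
  simpa only [zero_smul] using mulVec_nonneg hA hx.1

lemma normalize_mem [Nonempty n] {r : ℝ} (hr : 0 ≤ r) {y : n → ℝ} (hy : ∀ i, 0 < y i)
    (hle : r • y ≤ A *ᵥ y) : (r, (∑ i, y i)⁻¹ • y) ∈ collatzWielandtSet A := by
  have hsum : 0 < ∑ i, y i := Finset.sum_pos (fun i _ => hy i) Finset.univ_nonempty
  refine ⟨hr, ⟨fun i => mul_nonneg (inv_nonneg.2 hsum.le) (hy i).le, ?_⟩, ?_⟩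
  · simp only [Pi.smul_apply, smul_eq_mul, ← Finset.mul_sum, inv_mul_cancel₀ hsum.ne']
  · rw [mulVec_smul, smul_comm]
    exact smul_le_smul_of_nonneg_left hle (inv_nonneg.2 hsum.le)

lemma exists_gt_of_forall_lt [Nonempty n] {r : ℝ} (hr : 0 ≤ r) {y : n → ℝ} (hy : ∀ i, 0 < y i)
    (hlt : ∀ i, r * y i < (A *ᵥ y) i) : ∃ c ∈ collatzWielandtSet A, r < c.1 := by
  obtain ⟨i, hi⟩ := Finite.exists_min fun i => (A *ᵥ y) i / y i
  have hri : r < (A *ᵥ y) i / y i := (lt_div_iff₀ (hy i)).2 (hlt i)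
  exact ⟨_, normalize_mem (hr.trans hri.le) hy fun j => (le_div_iff₀ (hy j)).1 (hi j), hri⟩

lemma mulVec_eq_of_isMaxOn [Nonempty n] (hA : A.IsIrreducible)
    {c : ℝ × (n → ℝ)} (hc : c ∈ collatzWielandtSet A)
    (hmax : IsMaxOn Prod.fst (collatzWielandtSet A) c) : A *ᵥ c.2 = c.1 • c.2 := by
  obtain ⟨r, x⟩ := c
  obtain ⟨hr, hx, hle⟩ := hc
  dsimp only at hr hx hle ⊢
  by_contra h_ne
  obtain ⟨B, hB, hAB⟩ := exists_pos_commute_of_isIrreducible hA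
  have hB_pos {z : n → ℝ} (hz : 0 ≤ z) (hz0 : z ≠ 0) (i : n) : 0 < (B *ᵥ z) i := by
    obtain ⟨j, hj⟩ := exists_pos_apply_of_nonneg_of_ne_zero hz hz0
    exact mulVec_apply_pos (fun l => (hB i l).le) (hB i j) hz hj
  have hx0 : x ≠ 0 := by
    rintro rfl
    simp at h_ne
  have h_gap : B *ᵥ (A *ᵥ x - r • x) = A *ᵥ (B *ᵥ x) - r • (B *ᵥ x) := by
    rw [mulVec_sub, mulVec_smul, mulVec_mulVec, mulVec_mulVec, hAB.eq]
  have h_strict (i : n) : r * (B *ᵥ x) i < (A *ᵥ (B *ᵥ x)) i := by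
    have h_pos := hB_pos (sub_nonneg.2 hle) (sub_ne_zero.2 h_ne) i
    rw [h_gap] at h_pos
    exact sub_pos.1 h_pos
  obtain ⟨d, hd, hrd⟩ := exists_gt_of_forall_lt hr (hB_pos hx.1 hx0) h_strict
  exact (hmax hd).not_gt hrd

end collatzWielandtSet

section PerronFrobenius

variable {n : Type*} [Fintype n] [Nonempty n]

theorem exists_pos_eigenvector_of_isIrreducible {A : Matrix n n ℝ} (hA : A.IsIrreducible) :
    ∃ r > (0 : ℝ), ∃ w : n → ℝ, (∀ i, 0 < w i) ∧ A *ᵥ w = r • w := by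
  obtain ⟨⟨r, x⟩, hc, hmax⟩ := (collatzWielandtSet.isCompact hA.nonneg).exists_isMaxOn
    (collatzWielandtSet.nonempty hA.nonneg) continuous_fst.continuousOn
  have hAx : A *ᵥ x = r • x := collatzWielandtSet.mulVec_eq_of_isMaxOn hA hc hmax
  have hx : x ∈ stdSimplex ℝ n := hc.2.1
  have hx0 : x ≠ 0 := by
    rintro rfl
    simpa using hx.2
  exact ⟨r, eigenvalue_pos_of_nonneg_eigenvector hA hx.1 hx0 hAx, x,
    pos_of_nonneg_eigenvector hA hx.1 hx0 hAx, hAx⟩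

lemma existsUnique_normalized_pos_eigenvector {A : Matrix n n ℝ} (hA : A.IsIrreducible)
    {p : n → ℝ} (hp : ∀ i, 0 < p i) {r : ℝ} {w : n → ℝ} (hw : ∀ i, 0 < w i)
    (hAw : A *ᵥ w = r • w) :
    ∃! u : n → ℝ, (∀ i, 0 < u i) ∧ A *ᵥ u = r • u ∧ ∑ i, u i * u i / p i = 1 := by
  set N := ∑ i, w i * w i / p i with hN
  have hN_pos : 0 < N :=
    Finset.sum_pos (fun i _ => div_pos (mul_pos (hw i) (hw i)) (hp i)) Finset.univ_nonempty
  have hN_smul (s : ℝ) : ∑ i, (s • w) i * (s • w) i / p i = s ^ 2 * N := by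
    rw [hN, Finset.mul_sum]
    refine Finset.sum_congr rfl fun i _ => ?_
    rw [Pi.smul_apply, smul_eq_mul]
    ring
  have hs_pos : 0 < (√N)⁻¹ := inv_pos.2 (Real.sqrt_pos.2 hN_pos)
  have hs_sq : (√N)⁻¹ ^ 2 * N = 1 := by
    rw [inv_pow, Real.sq_sqrt hN_pos.le, inv_mul_cancel₀ hN_pos.ne']
  refine ⟨(√N)⁻¹ • w, ⟨fun i => mul_pos hs_pos (hw i), ?_, (hN_smul _).trans hs_sq⟩, ?_⟩
  · rw [mulVec_smul, hAw, smul_comm]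
  · rintro u ⟨hu, hAu, hu_norm⟩
    obtain ⟨t, rfl⟩ := exists_eq_smul_of_pos_eigenvector hA hw hAw hAu
    have ht_pos : 0 < t := pos_of_mul_pos_left (hu (Classical.arbitrary n)) (hw _).le
    have ht_sq : t ^ 2 = (√N)⁻¹ ^ 2 :=
      mul_right_cancel₀ hN_pos.ne' (((hN_smul t).symm.trans hu_norm).trans hs_sq.symm)
    rw [(pow_left_inj₀ ht_pos.le hs_pos.le two_ne_zero).1 ht_sq]

theorem statement_18_general [DecidableEq n] {p : n → ℝ} (hp : ∀ i, 0 < p i) {Q : Matrix n n ℝ}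
    (hQ : Q.IsIrreducible) :
    ∃ lam : ℝ, 0 < lam ∧
      (∃! w : n → ℝ, (∀ i, 0 < w i) ∧
        (Matrix.diagonal p * Q).mulVec w = lam • w ∧ ∑ i, w i * w i / p i = 1) ∧
      ∀ (μ : ℝ) (v : n → ℝ), v ≠ 0 →
        (Matrix.diagonal p * Q).mulVec v = μ • v → |μ| ≤ lam := by
  have hA : (diagonal p * Q).IsIrreducible := isIrreducible_diagonal_mul hp hQ
  obtain ⟨r, hr, w, hw, hAw⟩ := exists_pos_eigenvector_of_isIrreducible hA
  exact ⟨r, hr, existsUnique_normalized_pos_eigenvector hA hp hw hAw,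
    fun _ _ hv hAv => abs_eigenvalue_le hA.nonneg hw hAw.le hv hAv⟩

end PerronFrobenius

theorem statement_18 (k : ℕ) (hk : 1 ≤ k) (p : Fin k → ℝ) (hp : ∀ i, 0 < p i)
    (hpsum : ∑ i, p i = 1)
    (Q : Matrix (Fin k) (Fin k) ℝ) (hQ : Q.IsSymm) (hQ0 : ∀ i j, 0 ≤ Q i j)
    (hQk : ∀ i j, 0 < (Q ^ k) i j) :
    ∃ lam : ℝ, 0 < lam ∧
      (∃! w : Fin k → ℝ, (∀ i, 0 < w i) ∧
        (Matrix.diagonal p * Q).mulVec w = lam • w ∧ ∑ i, w i * w i / p i = 1) ∧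
      ∀ (μ : ℝ) (v : Fin k → ℝ), v ≠ 0 →
        (Matrix.diagonal p * Q).mulVec v = μ • v → |μ| ≤ lam := by
  have : Nonempty (Fin k) := ⟨⟨0, hk⟩⟩
  exact statement_18_general hp (IsPrimitive.isIrreducible ⟨hQ0, k, hk, hQk⟩)
end
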